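/- arXiv:2103.16382 — 10 statements merged into one kernel-verified Lean document; each statement's English description precedes it below -/
import Mathlib

section
/- Let n ≥ 3. Suppose real numbers a_{i,l} (for 1 ≤ i ≤ n−1 and l ∈ {n, n+1}) and b_i (for 1 ≤ i ≤ n−1) are such that for every point x in some nonempty relatively open subset U of the cylinder C one has Σ_{i=1}^{n−1} x_i · (a_{i,n} x_n + a_{i,n+1} x_{n+1} − b_i) = 0. Then a_{i,l} = 0 for all i and l, and b_i = 0 for all i. -/
/-- The cylinder `C = {x ∈ ℝ^{n+1} : x₁² + ⋯ + x_{n−1}² = 1}` (indices `0`-based in Lean: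
the first `n−1` coordinates). -/
def cylinderSet (n : ℕ) : Set (Fin (n + 1) → ℝ) :=
  {x | ∑ i ∈ Finset.univ.filter (fun i : Fin (n + 1) => (i : ℕ) < n - 1), (x i) ^ 2 = 1}

/-!
The relation is homogeneous in the spherical coordinates `u`, so normalising `u` extends it from a
relatively open piece of the cylinder to an open subset of the whole space. There, for each fixed
value `v` of the axial coordinates, it is a linear functional of `u` vanishing on an open set, so
every coefficient `∑ l, a i l * v l - b i` is zero. This holds for all `v` in an open set, so the
affine function of `v` is zero as well.
-/

open Filter Topology

theorem linearMap_eq_zero_of_eventually_eq_const {R E F : Type*} [Ring R] [TopologicalSpace R]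
    [NeBot (𝓝[{r : R | IsUnit r}] 0)] [AddCommGroup E] [TopologicalSpace E] [ContinuousAdd E]
    [Module R E] [ContinuousSMul R E] [AddCommGroup F] [Module R F]
    {f : E →ₗ[R] F} {x : E} {c : F} (h : ∀ᶠ y in 𝓝 x, f y = c) : f = 0 := by
  have translate_tendsto : Tendsto (x + ·) (𝓝 0) (𝓝 x) := by
    simpa using (continuous_const_add x).tendsto 0
  have ker_mem_nhds : (f.ker : Set E) ∈ 𝓝 0 :=
    (translate_tendsto.eventually h).mono fun v hv ↦
      LinearMap.mem_ker.mpr (by simpa [h.self_of_nhds] using hv)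
  exact LinearMap.ker_eq_top.mp <|
    f.ker.eq_top_of_nonempty_interior' ⟨0, mem_interior_iff_mem_nhds.mpr ker_mem_nhds⟩

section UnitSphereProd

variable {E F G : Type*} [NormedAddCommGroup E] [NormedSpace ℝ E] [TopologicalSpace F]
  [AddCommGroup G] [Module ℝ G] {g : F → E →ₗ[ℝ] G} {u₀ : E} {v₀ : F}

theorem continuousAt_normalize (hu₀ : u₀ ≠ 0) :
    ContinuousAt (NormedSpace.normalize : E → E) u₀ := by
  unfold NormedSpace.normalize
  fun_prop (disch := simpa using hu₀)

theorem eventually_nhds_apply_eq_zero_of_norm_eq_one (hu₀ : ‖u₀‖ = 1)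
    (h : ∀ᶠ p in 𝓝[{p : E × F | ‖p.1‖ = 1}] (u₀, v₀), g p.2 p.1 = 0) :
    ∀ᶠ p in 𝓝 (u₀, v₀), g p.2 p.1 = 0 := by
  have u₀_ne_zero : u₀ ≠ 0 := by
    rintro rfl
    simp at hu₀
  have normalize_tendsto :
      Tendsto (Prod.map NormedSpace.normalize id) (𝓝 (u₀, v₀)) (𝓝 (u₀, v₀)) := by
    simpa [ContinuousAt, NormedSpace.normalize_eq_self_of_norm_eq_one hu₀] using
      (continuousAt_normalize u₀_ne_zero).prodMap' (continuousAt_id (x := v₀))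
  have fst_ne_zero : ∀ᶠ p : E × F in 𝓝 (u₀, v₀), p.1 ≠ 0 :=
    continuousAt_fst.eventually_ne u₀_ne_zero
  filter_upwards [normalize_tendsto.eventually (eventually_nhdsWithin_iff.mp h), fst_ne_zero]
    with p relation_normalize hp
  have normalize_eq_zero : g p.2 (NormedSpace.normalize p.1) = 0 :=
    relation_normalize (NormedSpace.norm_normalize_eq_one_iff.mpr hp)
  rw [← NormedSpace.norm_smul_normalize p.1, map_smul, normalize_eq_zero, smul_zero]

theorem eventually_eq_zero_of_apply_eq_zero_of_norm_eq_one (hu₀ : ‖u₀‖ = 1)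
    (h : ∀ᶠ p in 𝓝[{p : E × F | ‖p.1‖ = 1}] (u₀, v₀), g p.2 p.1 = 0) :
    ∀ᶠ v in 𝓝 v₀, g v = 0 := by
  have relation_swap : ∀ᶠ q in 𝓝 (v₀, u₀), g q.1 q.2 = 0 :=
    continuous_swap.continuousAt.eventually (eventually_nhds_apply_eq_zero_of_norm_eq_one hu₀ h)
  exact relation_swap.curry_nhds.mono fun v hv ↦ linearMap_eq_zero_of_eventually_eq_const hv

end UnitSphereProd

section UnitCylinder

variable {ι α : Type*} {S T : Finset ι}

/-- The cylinder over the unit sphere in the coordinates `S`, all other coordinates being free. It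
is `cylinderSet n` when `S` consists of the first `n - 1` of the `n + 1` coordinates. -/
def unitCylinder (S : Finset ι) : Set (ι → ℝ) :=
  {x | ∑ i ∈ S, x i ^ 2 = 1}

theorem eqOn_extend_coe_compl (u : S → α) (v : ι → α) :
    Set.EqOn (Function.extend (↑) u v) v (S : Set ι)ᶜ := fun _ hj ↦
  Function.extend_apply' _ _ _ (by simpa using hj)

theorem extend_coe_restrict (x : ι → α) : Function.extend (↑) (S.restrict x) x = x := by
  funext j
  by_cases hj : j ∈ S
  · lift j to S using hj
    exact Subtype.val_injective.extend_apply _ _ _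
  · exact eqOn_extend_coe_compl _ _ hj

theorem continuous_extend_coe [TopologicalSpace α] :
    Continuous fun p : (S → α) × (ι → α) ↦ Function.extend (↑) p.1 p.2 := by
  refine continuous_pi fun j ↦ ?_
  by_cases hj : j ∈ S
  · lift j to S using hj
    simp only [Subtype.val_injective.extend_apply]
    fun_prop
  · simp only [eqOn_extend_coe_compl _ _ hj]
    fun_prop

theorem sum_extend_coe_mul (u : EuclideanSpace ℝ S) (v d : ι → ℝ) :
    ∑ i ∈ S, Function.extend (↑) u v i * d i = inner ℝ (WithLp.toLp 2 (S.restrict d)) u := by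
  rw [← Finset.sum_coe_sort, PiLp.inner_apply]
  simp only [Subtype.val_injective.extend_apply, Real.inner_apply, Finset.restrict, mul_comm]

theorem extend_coe_mem_unitCylinder_iff {u : EuclideanSpace ℝ S} {v : ι → ℝ} :
    Function.extend (↑) u v ∈ unitCylinder S ↔ ‖u‖ = 1 := by
  rw [← sq_eq_sq₀ (norm_nonneg u) zero_le_one, EuclideanSpace.real_norm_sq_eq, one_pow,
    unitCylinder, Set.mem_ofPred_eq, ← Finset.sum_coe_sort]
  simp only [Subtype.val_injective.extend_apply]

theorem eventually_eq_zero_of_sum_mul_eq_zero_on_unitCylinder {c : (ι → ℝ) → ι → ℝ}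
    (hc : DependsOn c (S : Set ι)ᶜ) {x₀ : ι → ℝ} (hx₀ : x₀ ∈ unitCylinder S)
    (h : ∀ᶠ x in 𝓝[unitCylinder S] x₀, ∑ i ∈ S, x i * c x i = 0) :
    ∀ᶠ x in 𝓝 x₀, ∀ i ∈ S, c x i = 0 := by
  classical
  let u₀ : EuclideanSpace ℝ S := WithLp.toLp 2 (S.restrict x₀)
  let glue (p : EuclideanSpace ℝ S × (ι → ℝ)) : ι → ℝ := Function.extend (↑) p.1 p.2
  let g (v : ι → ℝ) : EuclideanSpace ℝ S →ₗ[ℝ] ℝ := innerₗ _ (WithLp.toLp 2 (S.restrict (c v)))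
  have glue_base : glue (u₀, x₀) = x₀ := extend_coe_restrict x₀
  have norm_u₀ : ‖u₀‖ = 1 := extend_coe_mem_unitCylinder_iff.mp (glue_base.symm ▸ hx₀)
  have glue_tendsto :
      Tendsto glue (𝓝[{p | ‖p.1‖ = 1}] (u₀, x₀)) (𝓝[unitCylinder S] x₀) := by
    have glue_continuous : Continuous glue :=
      continuous_extend_coe.comp ((PiLp.continuous_ofLp 2 _).prodMap continuous_id)
    have glue_mapsTo : Set.MapsTo glue {p | ‖p.1‖ = 1} (unitCylinder S) := fun _ ↦
      extend_coe_mem_unitCylinder_iff.mpr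
    simpa only [glue_base] using
      glue_continuous.continuousWithinAt.tendsto_nhdsWithin (x := (u₀, x₀)) glue_mapsTo
  have relation_glue (p) : ∑ i ∈ S, glue p i * c (glue p) i = g p.2 p.1 := by
    rw [hc (eqOn_extend_coe_compl p.1 p.2)]
    exact sum_extend_coe_mul p.1 p.2 (c p.2)
  have g_eq_zero : ∀ᶠ v in 𝓝 x₀, g v = 0 :=
    eventually_eq_zero_of_apply_eq_zero_of_norm_eq_one norm_u₀ <|
      (glue_tendsto.eventually h).mono fun p hp ↦ (relation_glue p).symm.trans hp
  filter_upwards [g_eq_zero] with v hv i hi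
  simpa [g, EuclideanSpace.inner_single_right] using
    LinearMap.congr_fun hv (EuclideanSpace.single ⟨i, hi⟩ 1)

theorem eq_zero_of_eventually_sum_mul_eq {𝕜 : Type*} [NontriviallyNormedField 𝕜]
    {a : ι → 𝕜} {b : 𝕜} {x₀ : ι → 𝕜}
    (h : ∀ᶠ x in 𝓝 x₀, ∑ l ∈ T, a l * x l = b) : (∀ l ∈ T, a l = 0) ∧ b = 0 := by
  classical
  let f : (ι → 𝕜) →ₗ[𝕜] 𝕜 := ∑ l ∈ T, a l • LinearMap.proj l
  have f_apply (x : ι → 𝕜) : f x = ∑ l ∈ T, a l * x l := by simp [f]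
  have f_eq_zero : f = 0 :=
    linearMap_eq_zero_of_eventually_eq_const (h.mono fun x hx ↦ (f_apply x).trans hx)
  constructor
  · intro l hl
    simpa [f_apply, Pi.single_apply, hl] using
      LinearMap.congr_fun f_eq_zero (Pi.single l 1)
  · rw [← h.self_of_nhds, ← f_apply, f_eq_zero, LinearMap.zero_apply]

theorem cylinder_linear_relation_vanishes_general (hST : Disjoint S T) (a : ι → ι → ℝ)
    (b : ι → ℝ) {V : Set (ι → ℝ)} (hV : IsOpen V) (hne : (V ∩ unitCylinder S).Nonempty)
    (heq : ∀ x ∈ V ∩ unitCylinder S, ∑ i ∈ S, x i * ((∑ l ∈ T, a i l * x l) - b i) = 0) :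
    (∀ i l, i ∈ S → l ∈ T → a i l = 0) ∧ ∀ i ∈ S, b i = 0 := by
  obtain ⟨x₀, hx₀V, hx₀⟩ := hne
  let c (x : ι → ℝ) (i : ι) : ℝ := (∑ l ∈ T, a i l * x l) - b i
  have c_dependsOn : DependsOn c (S : Set ι)ᶜ := fun x y hxy ↦ by
    have eq_on_T : ∀ l ∈ T, x l = y l := fun l hl ↦ hxy l (Finset.disjoint_right.mp hST hl)
    funext i
    exact congrArg (· - b i) (Finset.sum_congr rfl fun l hl ↦ by rw [eq_on_T l hl])
  have relation_near : ∀ᶠ x in 𝓝[unitCylinder S] x₀, ∑ i ∈ S, x i * c x i = 0 := by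
    filter_upwards [mem_nhdsWithin_of_mem_nhds (hV.mem_nhds hx₀V), self_mem_nhdsWithin]
      with x hxV hx using heq x ⟨hxV, hx⟩
  have c_eq_zero : ∀ᶠ x in 𝓝 x₀, ∀ i ∈ S, c x i = 0 :=
    eventually_eq_zero_of_sum_mul_eq_zero_on_unitCylinder c_dependsOn hx₀ relation_near
  have coeff_eq_zero (i : ι) (hi : i ∈ S) : (∀ l ∈ T, a i l = 0) ∧ b i = 0 :=
    eq_zero_of_eventually_sum_mul_eq (c_eq_zero.mono fun x hx ↦ sub_eq_zero.mp (hx i hi))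
  exact ⟨fun i l hi ↦ (coeff_eq_zero i hi).1 l, fun i hi ↦ (coeff_eq_zero i hi).2⟩

end UnitCylinder

/-- Let `n ≥ 3`. Suppose real numbers `a_{i,l}` (`1 ≤ i ≤ n−1`,
`l ∈ {n, n+1}`) and `b_i` (`1 ≤ i ≤ n−1`) are such that for every `x` in some nonempty
relatively open subset `U` of the cylinder `C` one has
`Σ_{i=1}^{n−1} x_i (a_{i,n} x_n + a_{i,n+1} x_{n+1} − b_i) = 0`.
Then all `a_{i,l} = 0` and all `b_i = 0`.  (In Lean, `1`-based indices `1,…,n+1` become the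
`0`-based indices `0,…,n` of `Fin (n+1)`: `i ≤ n−1` becomes `(i:ℕ) < n−1` and
`l ∈ {n, n+1}` becomes `n−1 ≤ (l:ℕ)`.) -/
theorem cylinder_linear_relation_vanishes
    (n : ℕ) (hn : 3 ≤ n)
    (a : Fin (n + 1) → Fin (n + 1) → ℝ) (b : Fin (n + 1) → ℝ)
    (U : Set (Fin (n + 1) → ℝ))
    (hUsub : U ⊆ cylinderSet n)
    (hUrelOpen : ∃ V : Set (Fin (n + 1) → ℝ), IsOpen V ∧ U = V ∩ cylinderSet n)
    (hUne : U.Nonempty)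
    (heq : ∀ x ∈ U,
      ∑ i ∈ Finset.univ.filter (fun i : Fin (n + 1) => (i : ℕ) < n - 1),
        x i * ((∑ l ∈ Finset.univ.filter (fun l : Fin (n + 1) => n - 1 ≤ (l : ℕ)),
          a i l * x l) - b i) = 0) :
    (∀ i l : Fin (n + 1), (i : ℕ) < n - 1 → n - 1 ≤ (l : ℕ) → a i l = 0) ∧
    (∀ i : Fin (n + 1), (i : ℕ) < n - 1 → b i = 0) := by
  obtain ⟨V, hV, rfl⟩ := hUrelOpen
  simpa using cylinder_linear_relation_vanishes_general
    (Finset.disjoint_filter.mpr fun _ _ ↦ not_le.mpr) a b hV hUne heq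
end

section
/- Let n ≥ 4 and let S be a real orthogonal (n+1)×(n+1) matrix such that S_{ij} S_{lk} − S_{ik} S_{lj} = 0 for all indices 1 ≤ i, j, k ≤ n−1 and all l ∈ {n, n+1}. Then S_{lj} = 0 for every l ∈ {n, n+1} and every 1 ≤ j ≤ n−1; consequently S is block diagonal, preserving the direct sum decomposition ℝ^{n+1} = ℝ^{n−1} ⊕ ℝ² (an (n−1)×(n−1) orthogonal block and a 2×2 orthogonal block). -/
open Matrix

/-!
If `S l j ≠ 0` for some row `l` outside the block `s`, the relations make the restrictions to `s`
of the rows of `s` and of row `l` proportional to each other. These `#s + 1` independent rows are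
then determined by their entries in column `j` and in the columns outside `s`, which forces
`#s ≤ #sᶜ`. Hence `S` is block triangular, so `S⁻¹ = Sᵀ` is block triangular as well.
-/

section

variable {R ι κ : Type*} [CommRing R]

theorem card_le_card_compl_add_one_of_linearIndependent_of_proportional [IsDomain R] [Fintype ι]
    [Fintype κ] [DecidableEq κ] {v : ι → κ → R} (hv : LinearIndependent R v) {t : Finset κ}
    {c : κ → R} {j : κ} (hcj : c j ≠ 0) (hvc : ∀ i, ∀ k ∈ t, v i j * c k = v i k * c j) :
    Fintype.card ι ≤ tᶜ.card + 1 := by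
  let u : ι → R × ((tᶜ : Finset κ) → R) := fun i ↦ (v i j, fun k ↦ v i k)
  have hu : LinearIndependent R u := by
    rw [Fintype.linearIndependent_iff] at hv ⊢
    intro g hg
    have sum_col_j : ∑ i, g i * v i j = 0 := by
      simpa [u, Prod.fst_sum] using congrArg Prod.fst hg
    have sum_col_compl (k : κ) (hk : k ∉ t) : ∑ i, g i * v i k = 0 := by
      simpa [u, Prod.snd_sum] using
        congrFun (congrArg Prod.snd hg) ⟨k, Finset.mem_compl.mpr hk⟩
    have sum_col_mem (k : κ) (hk : k ∈ t) : ∑ i, g i * v i k = 0 := by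
      refine (mul_eq_zero_iff_right hcj).mp ?_
      calc (∑ i, g i * v i k) * c j = (∑ i, g i * v i j) * c k := by
            simp only [Finset.sum_mul, mul_assoc, hvc _ k hk]
        _ = 0 := by rw [sum_col_j, zero_mul]
    refine hv g (funext fun k ↦ ?_)
    simpa using (em (k ∈ t)).elim (sum_col_mem k) (sum_col_compl k)
  simpa [add_comm, Finset.card_compl] using hu.fintype_card_le_finrank

theorem apply_eq_zero_of_minors_eq_zero [IsDomain R] [Fintype κ] [DecidableEq κ]
    {S : Matrix ι κ R} (hS : LinearIndependent R S.row) {s : Finset ι} {t : Finset κ}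
    (hcard : tᶜ.card < s.card) {l : ι} (hl : l ∉ s) {j : κ}
    (hminor : ∀ i ∈ s, ∀ k ∈ t, S i j * S l k - S i k * S l j = 0) : S l j = 0 := by
  by_contra hlj
  have hrows : LinearIndependent R fun i : Finset.cons l s hl ↦ S i :=
    hS.comp _ Subtype.val_injective
  have hprop (i : Finset.cons l s hl) (k : κ) (hk : k ∈ t) : S i j * S l k = S i k * S l j := by
    rcases Finset.mem_cons.mp i.2 with hil | his
    · rw [hil, mul_comm]
    · exact sub_eq_zero.mp (hminor i his k hk)
  have hle := card_le_card_compl_add_one_of_linearIndependent_of_proportional hrows hlj hprop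
  rw [Fintype.card_coe, Finset.card_cons] at hle
  lia

theorem blockTriangular_transpose_of_mul_transpose_eq_one [Fintype ι] [DecidableEq ι] {α : Type*}
    [LinearOrder α] {b : ι → α} {S : Matrix ι ι R} (hS : S * Sᵀ = 1) (hb : S.BlockTriangular b) :
    Sᵀ.BlockTriangular b := by
  let : Invertible S := invertibleOfRightInverse S Sᵀ hS
  exact inv_eq_right_inv hS ▸ blockTriangular_inv_of_blockTriangular hb

theorem orthogonal_matrix_block_diagonal_general [IsDomain R] [Fintype ι] [DecidableEq ι]
    {s : Finset ι} (hcard : sᶜ.card < s.card) {S : Matrix ι ι R} (hS : S * Sᵀ = 1)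
    (hminor : ∀ i j k l, i ∈ s → j ∈ s → k ∈ s → l ∉ s → S i j * S l k - S i k * S l j = 0) :
    (∀ l j, l ∉ s → j ∈ s → S l j = 0) ∧ (∀ j l, j ∈ s → l ∉ s → S j l = 0) := by
  have hrows : LinearIndependent R S.row :=
    linearIndependent_rows_of_isUnit (IsUnit.of_mul_eq_one _ hS)
  have hlower (l j : ι) (hl : l ∉ s) (hj : j ∈ s) : S l j = 0 :=
    apply_eq_zero_of_minors_eq_zero hrows hcard hl
      fun i hi k hk ↦ hminor i j k l hi hj hk hl
  have notMem_lt_notMem_iff (j l : ι) : (j ∉ s) < (l ∉ s) ↔ j ∈ s ∧ l ∉ s := by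
    rw [lt_iff_le_not_ge]
    simp only [le_Prop_eq]
    tauto
  have hblock : S.BlockTriangular (· ∉ s) := fun l j hlt ↦
    have ⟨hj, hl⟩ := (notMem_lt_notMem_iff j l).mp hlt
    hlower l j hl hj
  have hblock_transpose : Sᵀ.BlockTriangular (· ∉ s) :=
    blockTriangular_transpose_of_mul_transpose_eq_one hS hblock
  exact ⟨hlower, fun j l hj hl ↦ hblock_transpose ((notMem_lt_notMem_iff j l).mpr ⟨hj, hl⟩)⟩

end

/-- Let `n ≥ 4` and let `S` be a real orthogonal `(n+1)×(n+1)` matrix with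
`S_{ij} S_{lk} − S_{ik} S_{lj} = 0` for all `1 ≤ i, j, k ≤ n−1` and `l ∈ {n, n+1}`.
Then `S_{lj} = 0` for all such `l, j`; consequently `S` is block diagonal with respect to
`ℝ^{n+1} = ℝ^{n−1} ⊕ ℝ²` (also `S_{jl} = 0` for `j ≤ n−1`, `l ∈ {n, n+1}`).  (In Lean,
`1`-based indices become the `0`-based indices of `Fin (n+1)`: `i ≤ n−1` becomes
`(i:ℕ) < n−1` and `l ∈ {n, n+1}` becomes `n−1 ≤ (l:ℕ)`.) -/
theorem orthogonal_matrix_block_diagonal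
    (n : ℕ) (hn : 4 ≤ n)
    (S : Matrix (Fin (n + 1)) (Fin (n + 1)) ℝ)
    (hS : S * Sᵀ = 1)
    (hrel : ∀ i j k l : Fin (n + 1),
      (i : ℕ) < n - 1 → (j : ℕ) < n - 1 → (k : ℕ) < n - 1 → n - 1 ≤ (l : ℕ) →
      S i j * S l k - S i k * S l j = 0) :
    (∀ l j : Fin (n + 1), n - 1 ≤ (l : ℕ) → (j : ℕ) < n - 1 → S l j = 0) ∧
    (∀ j l : Fin (n + 1), (j : ℕ) < n - 1 → n - 1 ≤ (l : ℕ) → S j l = 0) := by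
  let s : Finset (Fin (n + 1)) := .Iio ⟨n - 1, by lia⟩
  have hcard : sᶜ.card < s.card := by rw [Finset.card_compl, Fintype.card_fin, Fin.card_Iio]; lia
  simpa [s, Fin.lt_def, Fin.le_def] using
    orthogonal_matrix_block_diagonal_general hcard hS
      (by simpa [s, Fin.lt_def, Fin.le_def] using hrel)
end

section
/- Let n ≥ 4, let {J_α : 1 ≤ α ≤ (n−1)(n−2)/2} be an orthonormal basis of so(n−1), let S be a real orthogonal (n+1)×(n+1) matrix (so S⁻¹ = Sᵀ), let q ∈ ℝ^{n+1}, and define the rotation vector fields K_α(x) = S J_α S⁻¹ (x − q) on ℝ^{n+1}. If there is a nonempty relatively open subset U of the cylinder C such that ⟨K_α(x), ν(x)⟩ = 0 for every x ∈ U and every α, then for every α the matrix S J_α S⁻¹ belongs to so(n−1) (its entries vanish outside the top-left (n−1)×(n−1) block) and S J_α S⁻¹ q = 0; in particular K_α(x) = (S J_α S⁻¹) x for all x ∈ ℝ^{n+1}, and the matrices {S J_α S⁻¹ : 1 ≤ α ≤ (n−1)(n−2)/2} form an orthonormal basis of so(n−1). -/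
open Matrix

/-- Membership in `so(n−1) ⊂ so(n+1)`: skew-symmetric real `(n+1)×(n+1)` matrices whose
entries vanish outside the top-left `(n−1)×(n−1)` block. -/
def memSOnm1 (n : ℕ) (A : Matrix (Fin (n + 1)) (Fin (n + 1)) ℝ) : Prop :=
  Aᵀ = -A ∧ ∀ i j : Fin (n + 1), (n - 1 ≤ (i : ℕ) ∨ n - 1 ≤ (j : ℕ)) → A i j = 0

/-!
Write `y = y_s + y_c` for the splitting of a vector into its coordinates in `s` (those defining the
cylinder `∑_{i ∈ s} yᵢ² = 1`) and the remaining ones. For skew `A` the tangency condition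
`⟨A (y - q), y_s⟩ = 0` reduces to `⟨A (y_c - q), y_s⟩ = 0`, which is homogeneous in `y_s` and so
extends from the cylinder to an open set of the ambient space. Being affine in each coordinate, it
forces `A i k = 0` and `(A q) i = 0` for `i ∈ s`, `k ∉ s`.

Apply this to all `A = S B Sᵀ` with `B = eᵢ eⱼᵀ - eⱼ eᵢᵀ`, where `i, j ∈ s` are distinct: the
columns `u`, `v` of `S` with indices `i`, `j` satisfy `u_a v_b = v_a u_b` for `a ∈ s`, `b ∉ s`, and
orthogonality gives
`∑_{a ∈ s, b ∉ s} (u_a v_b)² = (∑_{a ∈ s} u_a v_a) (∑_{b ∉ s} u_b v_b) = -(∑_{a ∈ s} u_a v_a)² ≤ 0`,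
so `u_a v_b = 0` throughout. Hence, if `#s ≥ 2`, the columns of `S` indexed by `s` are either all
supported in `s` or all supported in `sᶜ`; the latter is impossible when `#sᶜ < #s`.
-/

open Filter Topology

section AffineInDirection

variable {𝕜 E : Type*} [NontriviallyNormedField 𝕜] [AddCommGroup E] [Module 𝕜 E]
  [TopologicalSpace E] [ContinuousAdd E] [ContinuousSMul 𝕜 E]

theorem eventually_slope_eq_zero {F g : E → 𝕜} {x v : E}
    (hslope : ∀ y (t : 𝕜), F (y + t • v) = F y + t * g y) (hF : ∀ᶠ y in 𝓝 x, F y = 0) :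
    ∀ᶠ y in 𝓝 x, g y = 0 := by
  filter_upwards [hF.eventually_nhds] with y hy
  have hline : Tendsto (fun t : 𝕜 => y + t • v) (𝓝[≠] 0) (𝓝 y) := by
    have hcont : Continuous fun t : 𝕜 => y + t • v := by fun_prop
    simpa using (hcont.tendsto 0).mono_left nhdsWithin_le_nhds
  obtain ⟨t, hFt, ht⟩ := ((hline.eventually hy).and self_mem_nhdsWithin).exists
  rw [hslope, hy.self_of_nhds, zero_add] at hFt
  exact (mul_eq_zero.mp hFt).resolve_left ht

end AffineInDirection

section Cylinder

variable {ι : Type*}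

/-- The cylinder `∑_{i ∈ s} xᵢ² = 1` in `ℝ^ι`, whose axis is spanned by the coordinates outside
`s`. -/
def coordCylinder (s : Finset ι) : Set (ι → ℝ) :=
  {x | ∑ i ∈ s, x i ^ 2 = 1}

variable {s : Finset ι} {x y : ι → ℝ}

theorem eventually_sum_sq_pos (hx : x ∈ coordCylinder s) :
    ∀ᶠ y in 𝓝 x, 0 < ∑ i ∈ s, y i ^ 2 := by
  have hpos : 0 < ∑ i ∈ s, x i ^ 2 := lt_of_lt_of_eq one_pos hx.symm
  have hcont : Continuous fun y : ι → ℝ => ∑ i ∈ s, y i ^ 2 := by fun_prop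
  exact hcont.continuousAt.eventually_const_lt hpos

variable [DecidableEq ι]

/-- The radial projection onto `coordCylinder s`: it normalizes the `s`-part of a vector and keeps
the other coordinates. Where the `s`-part vanishes it is the identity, as `0 / 0 = 0`. -/
noncomputable def cylinderProj (s : Finset ι) (y : ι → ℝ) : ι → ℝ :=
  fun i => if i ∈ s then y i / √(∑ j ∈ s, y j ^ 2) else y i

theorem cylinderProj_apply_of_mem {i : ι} (hi : i ∈ s) :
    cylinderProj s y i = y i / √(∑ j ∈ s, y j ^ 2) :=
  if_pos hi

theorem cylinderProj_apply_of_notMem {i : ι} (hi : i ∉ s) : cylinderProj s y i = y i :=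
  if_neg hi

theorem cylinderProj_mem_coordCylinder (hy : 0 < ∑ i ∈ s, y i ^ 2) :
    cylinderProj s y ∈ coordCylinder s := by
  calc ∑ i ∈ s, cylinderProj s y i ^ 2
      = ∑ i ∈ s, y i ^ 2 / ∑ j ∈ s, y j ^ 2 := Finset.sum_congr rfl fun i hi => by
        rw [cylinderProj_apply_of_mem hi, div_pow, Real.sq_sqrt hy.le]
    _ = 1 := by rw [← Finset.sum_div, div_self hy.ne']

theorem cylinderProj_eq_self (hx : x ∈ coordCylinder s) : cylinderProj s x = x := by
  have hnorm : ∑ j ∈ s, x j ^ 2 = 1 := hx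
  ext i
  simp [cylinderProj, hnorm]

theorem continuousAt_cylinderProj (hx : x ∈ coordCylinder s) :
    ContinuousAt (cylinderProj s) x := by
  have hnorm : √(∑ j ∈ s, x j ^ 2) ≠ 0 :=
    (Real.sqrt_pos.mpr (eventually_sum_sq_pos hx).self_of_nhds).ne'
  have hcont : Continuous fun y : ι → ℝ => √(∑ j ∈ s, y j ^ 2) := by fun_prop
  refine continuousAt_pi.mpr fun i => ?_
  by_cases hi : i ∈ s
  · simp only [cylinderProj, if_pos hi]
    exact (continuousAt_apply i x).div hcont.continuousAt hnorm
  · simp only [cylinderProj, if_neg hi]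
    exact continuousAt_apply i x

theorem tendsto_cylinderProj (hx : x ∈ coordCylinder s) :
    Tendsto (cylinderProj s) (𝓝 x) (𝓝[coordCylinder s] x) := by
  refine tendsto_nhdsWithin_iff.mpr ⟨?_, ?_⟩
  · simpa only [cylinderProj_eq_self hx] using (continuousAt_cylinderProj hx).tendsto
  · exact (eventually_sum_sq_pos hx).mono fun _ => cylinderProj_mem_coordCylinder

end Cylinder

section Tangency

variable {ι : Type*}

theorem sum_sum_mul_eq_zero_of_skew {R : Type*} [CommRing R] [IsAddTorsionFree R]
    {A : Matrix ι ι R} (hA : Aᵀ = -A) (s : Finset ι) (y : ι → R) :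
    ∑ i ∈ s, ∑ j ∈ s, A i j * y j * y i = 0 := by
  have hswap : ∑ i ∈ s, ∑ j ∈ s, A i j * y j * y i = -∑ i ∈ s, ∑ j ∈ s, A i j * y j * y i := by
    conv_lhs => rw [Finset.sum_comm]
    simp only [← Finset.sum_neg_distrib]
    refine Finset.sum_congr rfl fun i _ => Finset.sum_congr rfl fun j _ => ?_
    have hentry : A j i = -A i j := congrFun₂ hA i j
    rw [hentry]
    ring
  exact self_eq_neg.mp hswap

variable [Fintype ι] {A : Matrix ι ι ℝ} {s : Finset ι} {q x : ι → ℝ}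

section AxialField

variable [DecidableEq ι]

/-- The vector field `A (y_c - q)`, where `y_c` is `y` with the coordinates in `s` set to zero. -/
def axialField (A : Matrix ι ι ℝ) (s : Finset ι) (q y : ι → ℝ) : ι → ℝ :=
  fun i => ∑ k ∈ sᶜ, A i k * y k - (A *ᵥ q) i

theorem axialField_congr {y z : ι → ℝ} (h : ∀ k ∉ s, y k = z k) :
    axialField A s q y = axialField A s q z := by
  ext i
  simp only [axialField]
  congr 1
  exact Finset.sum_congr rfl fun k hk => by rw [h k (Finset.mem_compl.mp hk)]

theorem axialField_add_smul_single {k : ι} (hk : k ∉ s) (y : ι → ℝ) (t : ℝ) (i : ι) :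
    axialField A s q (y + t • Pi.single k 1) i = axialField A s q y i + t * A i k := by
  have hsum : ∑ j ∈ sᶜ, A i j * (y + t • Pi.single k 1 : ι → ℝ) j =
      ∑ j ∈ sᶜ, A i j * y j + t * A i k := by
    simp [mul_add, Finset.sum_add_distrib, Pi.single_apply, hk, mul_comm]
  rw [axialField, hsum, axialField, add_sub_right_comm]

theorem sum_mulVec_sub_mul_eq_sum_axialField_mul (hA : Aᵀ = -A) (y : ι → ℝ) :
    ∑ i ∈ s, (A *ᵥ (y - q)) i * y i = ∑ i ∈ s, axialField A s q y i * y i := by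
  have hsplit (i : ι) : (A *ᵥ (y - q)) i = ∑ j ∈ s, A i j * y j + axialField A s q y i := by
    rw [mulVec_sub, Pi.sub_apply, axialField, ← add_sub_assoc, Finset.sum_add_sum_compl]
    rfl
  simp only [hsplit, add_mul, Finset.sum_add_distrib, Finset.sum_mul,
    sum_sum_mul_eq_zero_of_skew hA, zero_add]

theorem sum_axialField_cylinderProj_mul (y : ι → ℝ) :
    ∑ i ∈ s, axialField A s q (cylinderProj s y) i * cylinderProj s y i =
      (∑ i ∈ s, axialField A s q y i * y i) / √(∑ i ∈ s, y i ^ 2) := by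
  rw [axialField_congr fun k hk => cylinderProj_apply_of_notMem hk, Finset.sum_div]
  exact Finset.sum_congr rfl fun i hi => by rw [cylinderProj_apply_of_mem hi, mul_div_assoc]

theorem eventually_sum_axialField_mul_eq_zero (hA : Aᵀ = -A) (hx : x ∈ coordCylinder s)
    (htangent : ∀ᶠ y in 𝓝[coordCylinder s] x, ∑ i ∈ s, (A *ᵥ (y - q)) i * y i = 0) :
    ∀ᶠ y in 𝓝 x, ∑ i ∈ s, axialField A s q y i * y i = 0 := by
  filter_upwards [(tendsto_cylinderProj hx).eventually htangent, eventually_sum_sq_pos hx]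
    with y hy hpos
  rw [sum_mulVec_sub_mul_eq_sum_axialField_mul hA, sum_axialField_cylinderProj_mul] at hy
  exact (div_eq_zero_iff.mp hy).resolve_right (Real.sqrt_pos.mpr hpos).ne'

theorem eventually_axialField_eq_zero (hA : Aᵀ = -A) (hx : x ∈ coordCylinder s)
    (htangent : ∀ᶠ y in 𝓝[coordCylinder s] x, ∑ i ∈ s, (A *ᵥ (y - q)) i * y i = 0)
    {i : ι} (hi : i ∈ s) : ∀ᶠ y in 𝓝 x, axialField A s q y i = 0 := by
  refine eventually_slope_eq_zero (v := Pi.single i 1) (fun y t => ?_)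
    (eventually_sum_axialField_mul_eq_zero hA hx htangent)
  have hoff : ∀ k ∉ s, (y + t • Pi.single i 1 : ι → ℝ) k = y k := fun k hk => by
    simp [ne_of_mem_of_not_mem hi hk |>.symm]
  rw [axialField_congr hoff]
  simp [mul_add, Finset.sum_add_distrib, Pi.single_apply, hi, mul_comm]

end AxialField

theorem apply_eq_zero_of_tangent (hA : Aᵀ = -A) (hx : x ∈ coordCylinder s)
    (htangent : ∀ᶠ y in 𝓝[coordCylinder s] x, ∑ i ∈ s, (A *ᵥ (y - q)) i * y i = 0)
    {i k : ι} (hi : i ∈ s) (hk : k ∉ s) : A i k = 0 := by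
  classical
  exact (eventually_slope_eq_zero (v := Pi.single k 1) (g := fun _ => A i k)
    (fun y t => axialField_add_smul_single hk y t i)
    (eventually_axialField_eq_zero hA hx htangent hi)).self_of_nhds

theorem mulVec_apply_eq_zero_of_tangent (hA : Aᵀ = -A) (hx : x ∈ coordCylinder s)
    (htangent : ∀ᶠ y in 𝓝[coordCylinder s] x, ∑ i ∈ s, (A *ᵥ (y - q)) i * y i = 0)
    {i : ι} (hi : i ∈ s) : (A *ᵥ q) i = 0 := by
  classical
  have hfield := (eventually_axialField_eq_zero hA hx htangent hi).self_of_nhds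
  have haxial : ∑ k ∈ sᶜ, A i k * x k = 0 := Finset.sum_eq_zero fun k hk => by
    rw [apply_eq_zero_of_tangent hA hx htangent hi (Finset.mem_compl.mp hk), zero_mul]
  rwa [axialField, haxial, zero_sub, neg_eq_zero] at hfield

end Tangency

section SkewOn

variable {ι : Type*}

/-- The Lie algebra `so(s)`, as a submodule of the `ι × ι` matrices: the skew-symmetric matrices
whose entries vanish outside the block `s × s`. -/
def skewOn (R : Type*) [CommRing R] (s : Finset ι) : Submodule R (Matrix ι ι R) where
  carrier := {A | Aᵀ = -A ∧ ∀ i j, i ∉ s ∨ j ∉ s → A i j = 0}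
  add_mem' := by
    rintro A B ⟨hA, hA0⟩ ⟨hB, hB0⟩
    exact ⟨by rw [transpose_add, hA, hB, neg_add],
      fun i j h => by rw [Matrix.add_apply, hA0 i j h, hB0 i j h, add_zero]⟩
  zero_mem' := ⟨by simp, fun _ _ _ => rfl⟩
  smul_mem' := by
    rintro c A ⟨hA, hA0⟩
    exact ⟨by rw [transpose_smul, hA, smul_neg],
      fun i j h => by rw [Matrix.smul_apply, hA0 i j h, smul_zero]⟩

variable {R : Type*} [CommRing R] {s : Finset ι} {A B S : Matrix ι ι R}

theorem mem_skewOn : A ∈ skewOn R s ↔ Aᵀ = -A ∧ ∀ i j, i ∉ s ∨ j ∉ s → A i j = 0 :=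
  Iff.rfl

theorem single_sub_single_mem_skewOn [DecidableEq ι] {i j : ι} (hi : i ∈ s) (hj : j ∈ s) :
    single i j 1 - single j i 1 ∈ skewOn R s := by
  refine ⟨by simp, fun a b hab => ?_⟩
  have hij : ¬(i = a ∧ j = b) := by grind
  have hji : ¬(j = a ∧ i = b) := by grind
  simp [hij, hji]

variable [Fintype ι]

theorem transpose_conj_eq_neg (S : Matrix ι ι R) (hB : Bᵀ = -B) :
    (S * B * Sᵀ)ᵀ = -(S * B * Sᵀ) := by
  simp [transpose_mul, hB, Matrix.mul_assoc]

theorem conj_mem_skewOn (hS : ∀ i ∈ s, ∀ k ∉ s, S k i = 0) (hB : B ∈ skewOn R s) :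
    S * B * Sᵀ ∈ skewOn R s := by
  have hskew := transpose_conj_eq_neg S hB.1
  have hrow : ∀ a ∉ s, ∀ b, (S * B * Sᵀ) a b = 0 := fun a ha b => by
    rw [Matrix.mul_assoc, Matrix.mul_apply]
    refine Finset.sum_eq_zero fun i _ => ?_
    by_cases hi : i ∈ s
    · rw [hS i hi a ha, zero_mul]
    · have hBi : ∀ j, B i j = 0 := fun j => hB.2 i j (.inl hi)
      simp [Matrix.mul_apply, hBi]
  refine ⟨hskew, fun a b hab => hab.elim (hrow a · b) fun hb => ?_⟩
  rw [← transpose_apply (S * B * Sᵀ), hskew, neg_apply, hrow b hb a, neg_zero]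

theorem mulVec_eq_zero_of_mem_skewOn {q : ι → R} (hA : A ∈ skewOn R s)
    (hq : ∀ i ∈ s, (A *ᵥ q) i = 0) : A *ᵥ q = 0 := by
  ext i
  by_cases hi : i ∈ s
  · exact hq i hi
  · exact Finset.sum_eq_zero fun k _ => mul_eq_zero_of_left (hA.2 i k (.inl hi)) _

end SkewOn

section Rigidity

variable {ι R : Type*} [Fintype ι] [CommRing R]

theorem conj_single_sub_single_apply [DecidableEq ι] (S : Matrix ι ι R) (i j a b : ι) :
    (S * (single i j 1 - single j i 1 : Matrix ι ι R) * Sᵀ) a b =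
      S a i * S b j - S a j * S b i := by
  have hconj (k l : ι) : (S * (single k l 1 : Matrix ι ι R) * Sᵀ) a b = S a k * S b l := by
    rw [Matrix.mul_assoc, Matrix.mul_apply, Finset.sum_eq_single k] <;> simp +contextual
  rw [mul_sub, sub_mul, Matrix.sub_apply, hconj, hconj]

variable [LinearOrder R] [IsStrictOrderedRing R] {s : Finset ι}

theorem mul_eq_zero_of_dotProduct_eq_zero_of_cross {u v : ι → R} (huv : u ⬝ᵥ v = 0)
    (hcross : ∀ a ∈ s, ∀ b ∉ s, u a * v b = v a * u b) {a b : ι} (ha : a ∈ s) (hb : b ∉ s) :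
    u a * v b = 0 := by
  classical
  have hcompl : ∑ b ∈ sᶜ, u b * v b = -∑ a ∈ s, u a * v a := by
    rw [eq_neg_iff_add_eq_zero, Finset.sum_compl_add_sum]
    exact huv
  have hsum : ∑ p ∈ s ×ˢ sᶜ, (u p.1 * v p.2) ^ 2 = -(∑ a ∈ s, u a * v a) ^ 2 := by
    calc ∑ p ∈ s ×ˢ sᶜ, (u p.1 * v p.2) ^ 2
        = ∑ p ∈ s ×ˢ sᶜ, (u p.1 * v p.1) * (u p.2 * v p.2) :=
          Finset.sum_congr rfl fun p hp => by
            obtain ⟨hp₁, hp₂⟩ := Finset.mem_product.mp hp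
            linear_combination
              u p.1 * v p.2 * hcross p.1 hp₁ p.2 (Finset.mem_compl.mp hp₂)
      _ = (∑ a ∈ s, u a * v a) * ∑ b ∈ sᶜ, u b * v b := by
          rw [Finset.sum_mul_sum, Finset.sum_product]
      _ = -(∑ a ∈ s, u a * v a) ^ 2 := by rw [hcompl]; ring
  have hnonneg : ∀ p ∈ s ×ˢ sᶜ, 0 ≤ (u p.1 * v p.2) ^ 2 := fun _ _ => sq_nonneg _
  have hzero : ∑ p ∈ s ×ˢ sᶜ, (u p.1 * v p.2) ^ 2 = 0 :=
    le_antisymm (hsum.trans_le (neg_nonpos.mpr (sq_nonneg _))) (Finset.sum_nonneg hnonneg)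
  have hmem : (a, b) ∈ s ×ˢ sᶜ := Finset.mem_product.mpr ⟨ha, Finset.mem_compl.mpr hb⟩
  exact sq_eq_zero_iff.mp ((Finset.sum_eq_zero_iff_of_nonneg hnonneg).mp hzero _ hmem)

variable [DecidableEq ι] {S : Matrix ι ι R}

theorem exists_apply_ne_zero_of_card_lt (hS : Sᵀ * S = 1) {t : Finset ι}
    (hcard : t.card < s.card) : ∃ i ∈ s, ∃ k ∉ t, S k i ≠ 0 := by
  by_contra! hzero
  have hcol (i : ι) : ∑ k, S k i ^ 2 = 1 := by
    simpa [Matrix.mul_apply, sq] using congrFun₂ hS i i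
  have hrow (k : ι) : ∑ i, S k i ^ 2 = 1 := by
    have hS' : S * Sᵀ = 1 := mul_eq_one_comm.mp hS
    simpa [Matrix.mul_apply, sq] using congrFun₂ hS' k k
  have hle : (s.card : R) ≤ t.card := by
    calc (s.card : R) = ∑ i ∈ s, ∑ k, S k i ^ 2 := by simp [hcol]
      _ = ∑ i ∈ s, ∑ k ∈ t, S k i ^ 2 := Finset.sum_congr rfl fun i hi =>
          (Finset.sum_subset (Finset.subset_univ t) fun k _ hk => by simp [hzero i hi k hk]).symm
      _ = ∑ k ∈ t, ∑ i ∈ s, S k i ^ 2 := Finset.sum_comm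
      _ ≤ ∑ k ∈ t, ∑ i, S k i ^ 2 := Finset.sum_le_sum fun k _ =>
          Finset.sum_le_univ_sum_of_nonneg fun i => sq_nonneg _
      _ = t.card := by simp [hrow]
  exact hcard.not_ge (Nat.cast_le.mp hle)

theorem apply_mul_apply_eq_zero_of_conj_skewOn (hS : Sᵀ * S = 1)
    (hoff : ∀ B ∈ skewOn R s, ∀ a ∈ s, ∀ b ∉ s, (S * B * Sᵀ) a b = 0)
    {i j : ι} (hi : i ∈ s) (hj : j ∈ s) (hij : i ≠ j) {a b : ι} (ha : a ∈ s) (hb : b ∉ s) :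
    S a i * S b j = 0 := by
  have horth : S.col i ⬝ᵥ S.col j = 0 := by
    simpa [Matrix.mul_apply, hij, dotProduct] using congrFun₂ hS i j
  refine mul_eq_zero_of_dotProduct_eq_zero_of_cross horth (fun a ha b hb => ?_) ha hb
  have hentry := hoff _ (single_sub_single_mem_skewOn hi hj) a ha b hb
  rwa [conj_single_sub_single_apply, sub_eq_zero] at hentry

theorem apply_eq_zero_of_conj_skewOn (hS : Sᵀ * S = 1) (hcard : sᶜ.card < s.card)
    (hoff : ∀ B ∈ skewOn R s, ∀ a ∈ s, ∀ b ∉ s, (S * B * Sᵀ) a b = 0) :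
    ∀ i ∈ s, ∀ k ∉ s, S k i = 0 := by
  have hmul {i j a b : ι} (hi : i ∈ s) (hj : j ∈ s) (hij : i ≠ j) (ha : a ∈ s) (hb : b ∉ s) :=
    apply_mul_apply_eq_zero_of_conj_skewOn hS hoff hi hj hij ha hb
  obtain ⟨i₀, hi₀, a₀, ha₀, hne₀⟩ := exists_apply_ne_zero_of_card_lt hS hcard
  have ha₀ : a₀ ∈ s := by simpa using ha₀
  have hother : ∀ j ∈ s, j ≠ i₀ → ∀ k ∉ s, S k j = 0 := fun j hj hji k hk =>
    (mul_eq_zero.mp (hmul hi₀ hj hji.symm ha₀ hk)).resolve_left hne₀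
  intro i hi k hk
  obtain rfl | hii₀ := eq_or_ne i i₀
  · have hone : 1 < s.card := by
      have : 0 < sᶜ.card := Finset.card_pos.mpr ⟨k, Finset.mem_compl.mpr hk⟩
      omega
    obtain ⟨j, hj, hji⟩ := Finset.exists_mem_ne hone i
    obtain ⟨a, ha⟩ : ∃ a, S a j ≠ 0 := by
      by_contra! hcol
      simpa [Matrix.mul_apply, hcol] using congrFun₂ hS j j
    have has : a ∈ s := by_contra fun h => ha (hother j hj hji a h)
    exact (mul_eq_zero.mp (hmul hj hi hji has hk)).resolve_left ha
  · exact hother i hi hii₀ k hk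

end Rigidity

section Conjugation

variable {ι R : Type*} [Fintype ι] [CommRing R] {S : Matrix ι ι R}

theorem conj_apply_eq_zero_of_mem_span {κ : Type*} {J : κ → Matrix ι ι R} {a b : ι}
    (hJ : ∀ α, (S * J α * Sᵀ) a b = 0) {B : Matrix ι ι R}
    (hB : B ∈ Submodule.span R (Set.range J)) : (S * B * Sᵀ) a b = 0 := by
  induction hB using Submodule.span_induction with
  | mem B hB => obtain ⟨α, rfl⟩ := hB; exact hJ α
  | zero => simp
  | add B C _ _ hB hC => rw [mul_add, add_mul, Matrix.add_apply, hB, hC, add_zero]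
  | smul c B _ hB => rw [Matrix.mul_smul, Matrix.smul_mul, Matrix.smul_apply, hB, smul_zero]

variable [DecidableEq ι]

theorem trace_conj_mul_transpose_conj (hS : Sᵀ * S = 1) (A B : Matrix ι ι R) :
    trace ((S * A * Sᵀ) * (S * B * Sᵀ)ᵀ) = trace (A * Bᵀ) := by
  calc trace ((S * A * Sᵀ) * (S * B * Sᵀ)ᵀ)
      = trace (S * (A * (Sᵀ * S) * Bᵀ * Sᵀ)) := by
        simp only [transpose_mul, transpose_transpose, Matrix.mul_assoc]
    _ = trace (A * (Sᵀ * S) * Bᵀ * (Sᵀ * S)) := by rw [trace_mul_comm, Matrix.mul_assoc _ Sᵀ S]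
    _ = trace (A * Bᵀ) := by rw [hS, Matrix.mul_one, Matrix.mul_one]

theorem injective_mulLeftRight_transpose (hS : Sᵀ * S = 1) :
    Function.Injective (LinearMap.mulLeftRight R (S, Sᵀ)) := by
  refine Function.LeftInverse.injective (g := fun B => Sᵀ * B * S) fun B => ?_
  calc Sᵀ * (S * B * Sᵀ) * S = (Sᵀ * S) * B * (Sᵀ * S) := by simp only [Matrix.mul_assoc]
    _ = B := by rw [hS, Matrix.one_mul, Matrix.mul_one]

variable {𝕜 : Type*} [Field 𝕜] {S : Matrix ι ι 𝕜}

theorem map_mulLeftRight_transpose_eq (hS : Sᵀ * S = 1) {W : Submodule 𝕜 (Matrix ι ι 𝕜)}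
    (hW : ∀ B ∈ W, S * B * Sᵀ ∈ W) : W.map (LinearMap.mulLeftRight 𝕜 (S, Sᵀ)) = W := by
  refine Submodule.eq_of_le_of_finrank_eq (Submodule.map_le_iff_le_comap.mpr hW) ?_
  exact (Submodule.equivMapOfInjective _ (injective_mulLeftRight_transpose hS) W).finrank_eq.symm

theorem span_range_conj_eq {κ : Type*} {J : κ → Matrix ι ι 𝕜} (hS : Sᵀ * S = 1)
    (hconj : ∀ B ∈ Submodule.span 𝕜 (Set.range J), S * B * Sᵀ ∈ Submodule.span 𝕜 (Set.range J)) :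
    Submodule.span 𝕜 (Set.range fun α => S * J α * Sᵀ) = Submodule.span 𝕜 (Set.range J) := by
  conv_rhs => rw [← map_mulLeftRight_transpose_eq hS hconj, Submodule.map_span, ← Set.range_comp]
  rfl

end Conjugation

theorem cylinder_rotation_vector_fields_normalize_general
    {ι κ : Type*} [Fintype ι] [DecidableEq ι] [Fintype κ] [DecidableEq κ]
    (s : Finset ι) (hs : sᶜ.card < s.card)
    (J : κ → Matrix ι ι ℝ) (hJmem : ∀ α, J α ∈ skewOn ℝ s)
    (hJorth : ∀ α β, trace (J α * (J β)ᵀ) = if α = β then 1 else 0)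
    (hJspan : ∀ B ∈ skewOn ℝ s, ∃ c : κ → ℝ, B = ∑ α, c α • J α)
    (S : Matrix ι ι ℝ) (hS : S * Sᵀ = 1) (q : ι → ℝ)
    (K : κ → (ι → ℝ) → ι → ℝ) (hK : ∀ α x, K α x = (S * J α * Sᵀ) *ᵥ (x - q))
    (U : Set (ι → ℝ)) (hU : ∃ V : Set (ι → ℝ), IsOpen V ∧ U = V ∩ coordCylinder s)
    (hUne : U.Nonempty) (hnormal : ∀ x ∈ U, ∀ α, ∑ i ∈ s, K α x i * x i = 0) :
    (∀ α, S * J α * Sᵀ ∈ skewOn ℝ s) ∧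
    (∀ α, (S * J α * Sᵀ) *ᵥ q = 0) ∧
    (∀ α x, K α x = (S * J α * Sᵀ) *ᵥ x) ∧
    (∀ α β, trace ((S * J α * Sᵀ) * (S * J β * Sᵀ)ᵀ) = if α = β then 1 else 0) ∧
    (∀ B ∈ skewOn ℝ s, ∃ c : κ → ℝ, B = ∑ α, c α • (S * J α * Sᵀ)) := by
  have hS' : Sᵀ * S = 1 := mul_eq_one_comm.mp hS
  have hspan : Submodule.span ℝ (Set.range J) = skewOn ℝ s :=
    le_antisymm (Submodule.span_le.mpr (Set.range_subset_iff.mpr hJmem)) fun B hB =>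
      Submodule.mem_span_range_iff_exists_fun ℝ |>.mpr ((hJspan B hB).imp fun _ => Eq.symm)
  obtain ⟨V, hV, rfl⟩ := hU
  obtain ⟨x, hxV, hx⟩ := hUne
  have hskew α : (S * J α * Sᵀ)ᵀ = -(S * J α * Sᵀ) := transpose_conj_eq_neg S (hJmem α).1
  have htangent α : ∀ᶠ y in 𝓝[coordCylinder s] x,
      ∑ i ∈ s, ((S * J α * Sᵀ) *ᵥ (y - q)) i * y i = 0 := by
    filter_upwards [inter_mem_nhdsWithin _ (hV.mem_nhds hxV)] with y hy
    simpa only [hK] using hnormal y hy.symm α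
  have hoff : ∀ B ∈ skewOn ℝ s, ∀ a ∈ s, ∀ b ∉ s, (S * B * Sᵀ) a b = 0 := fun B hB a ha b hb =>
    conj_apply_eq_zero_of_mem_span
      (fun α => apply_eq_zero_of_tangent (hskew α) hx (htangent α) ha hb) (hspan ▸ hB)
  have hmem : ∀ B ∈ skewOn ℝ s, S * B * Sᵀ ∈ skewOn ℝ s := fun _ =>
    conj_mem_skewOn (apply_eq_zero_of_conj_skewOn hS' hs hoff)
  have hq α : (S * J α * Sᵀ) *ᵥ q = 0 := mulVec_eq_zero_of_mem_skewOn (hmem _ (hJmem α)) fun _ =>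
    mulVec_apply_eq_zero_of_tangent (hskew α) hx (htangent α)
  refine ⟨fun α => hmem _ (hJmem α), hq, fun α y => by rw [hK, mulVec_sub, hq, sub_zero],
    fun α β => by rw [trace_conj_mul_transpose_conj hS', hJorth], fun B hB => ?_⟩
  rw [← hspan, ← span_range_conj_eq hS' (hspan ▸ hmem)] at hB
  exact ((Submodule.mem_span_range_iff_exists_fun ℝ).mp hB).imp fun _ => Eq.symm

section FirstCoordinates

theorem memSOnm1_iff_mem_skewOn {n : ℕ} {A : Matrix (Fin (n + 1)) (Fin (n + 1)) ℝ} :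
    memSOnm1 n A ↔ A ∈ skewOn ℝ (Finset.univ.filter fun i : Fin (n + 1) => (i : ℕ) < n - 1) := by
  simp [memSOnm1, mem_skewOn]

theorem card_compl_filter_lt_card_filter {n : ℕ} (hn : 4 ≤ n) :
    (Finset.univ.filter fun i : Fin (n + 1) => (i : ℕ) < n - 1)ᶜ.card <
      (Finset.univ.filter fun i : Fin (n + 1) => (i : ℕ) < n - 1).card := by
  have hcard : (Finset.univ.filter fun i : Fin (n + 1) => (i : ℕ) < n - 1).card = n - 1 := by
    rw [Fin.card_filter_val_lt]
    omega
  rw [Finset.card_compl, Fintype.card_fin, hcard]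
  omega

end FirstCoordinates

/-- Let `n ≥ 4`, `{J_α}` an orthonormal basis of `so(n−1)` (each `J_α` lies in
`so(n−1)`, `Tr(J_α J_βᵀ) = δ_{αβ}`, and they span `so(n−1)`), `S` orthogonal, `q ∈ ℝ^{n+1}`,
and `K_α(x) = S J_α S⁻¹ (x − q)`.  If `⟨K_α(x), ν(x)⟩ = 0` for every `x` in some nonempty
relatively open subset `U` of the cylinder (where `ν(x) = (x₁,…,x_{n−1},0,0)`), then each
`S J_α S⁻¹ ∈ so(n−1)`, `S J_α S⁻¹ q = 0`, hence `K_α(x) = (S J_α S⁻¹) x`, and the matrices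
`{S J_α S⁻¹}` form an orthonormal basis of `so(n−1)`. -/
theorem cylinder_rotation_vector_fields_normalize
    (n : ℕ) (hn : 4 ≤ n)
    (J : Fin ((n - 1) * (n - 2) / 2) → Matrix (Fin (n + 1)) (Fin (n + 1)) ℝ)
    (hJmem : ∀ α, memSOnm1 n (J α))
    (hJorth : ∀ α β, Matrix.trace (J α * (J β)ᵀ) = if α = β then 1 else 0)
    (hJspan : ∀ B, memSOnm1 n B →
      ∃ c : Fin ((n - 1) * (n - 2) / 2) → ℝ, B = ∑ α, c α • J α)
    (S : Matrix (Fin (n + 1)) (Fin (n + 1)) ℝ) (hS : S * Sᵀ = 1)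
    (q : Fin (n + 1) → ℝ)
    (K : Fin ((n - 1) * (n - 2) / 2) → (Fin (n + 1) → ℝ) → Fin (n + 1) → ℝ)
    (hK : ∀ α x, K α x = (S * J α * Sᵀ).mulVec (x - q))
    (U : Set (Fin (n + 1) → ℝ))
    (hUsub : U ⊆ cylinderSet n)
    (hUrelOpen : ∃ V : Set (Fin (n + 1) → ℝ), IsOpen V ∧ U = V ∩ cylinderSet n)
    (hUne : U.Nonempty)
    (hnormal : ∀ x ∈ U, ∀ α,
      ∑ i ∈ Finset.univ.filter (fun i : Fin (n + 1) => (i : ℕ) < n - 1),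
        K α x i * x i = 0) :
    (∀ α, memSOnm1 n (S * J α * Sᵀ)) ∧
    (∀ α, (S * J α * Sᵀ).mulVec q = 0) ∧
    (∀ α x, K α x = (S * J α * Sᵀ).mulVec x) ∧
    (∀ α β, Matrix.trace ((S * J α * Sᵀ) * (S * J β * Sᵀ)ᵀ) = if α = β then 1 else 0) ∧
    (∀ B, memSOnm1 n B →
      ∃ c : Fin ((n - 1) * (n - 2) / 2) → ℝ, B = ∑ α, c α • (S * J α * Sᵀ)) := by
  simp only [memSOnm1_iff_mem_skewOn] at hJmem hJspan ⊢
  exact cylinder_rotation_vector_fields_normalize_general _ (card_compl_filter_lt_card_filter hn)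
    J hJmem hJorth hJspan S hS q K hK U hUrelOpen hUne hnormal
end

section
/- Let n ≥ 4, let {J_α : 1 ≤ α ≤ (n−1)(n−2)/2} be an orthonormal basis of so(n−1), let S be a real orthogonal (n+1)×(n+1) matrix (so S⁻¹ = Sᵀ), let q ∈ ℝ^{n+1}, and define the rotation vector fields K_α(x) = S J_α S⁻¹ (x − q) on ℝ^{n+1}. If there is a nonempty relatively open subset U of M consisting of points with x̄ ≠ 0 such that ⟨K_α(x), ν(x)⟩ = 0 for every x ∈ U and every α, then for every α the matrix S J_α S⁻¹ belongs to so(n−1) (its entries vanish outside the top-left (n−1)×(n−1) block) and S J_α S⁻¹ q = 0; in particular K_α(x) = (S J_α S⁻¹) x for all x ∈ ℝ^{n+1}, and the matrices {S J_α S⁻¹ : 1 ≤ α ≤ (n−1)(n−2)/2} form an orthonormal basis of so(n−1). -/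
open Matrix

/-- `|x̄|`, the norm of the first `n−1` coordinates of `x ∈ ℝ^{n+1}`. -/
noncomputable def rbar (n : ℕ) (x : Fin (n + 1) → ℝ) : ℝ :=
  Real.sqrt (∑ i ∈ Finset.univ.filter (fun i : Fin (n + 1) => (i : ℕ) < n - 1), (x i) ^ 2)

/-- The hypersurface `Bowl^{n−1} × ℝ = {(x̄, u(|x̄|), x_{n+1})} ⊂ ℝ^{n+1}`, i.e. the graph
condition that the `n`-th coordinate (index `n−1` in `0`-based `Fin (n+1)`) equals
`u(|x̄|)`. -/
def bowlTimesR (n : ℕ) (u : ℝ → ℝ) : Set (Fin (n + 1) → ℝ) :=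
  {x | x ⟨n - 1, by omega⟩ = u (rbar n x)}

/-!
Write `x = (v, y, z) ∈ ℝ^{n-1} × ℝ × ℝ` and let `x ↦ A x + b` be an affine field with `A` skew. Let
`a` and `c` be the `ℝ^{n-1}`-parts of the columns of `A` belonging to `y` and `z`, let `d` be the
`(y, z)`-entry of `A`, and let `b'` and `β` be the `ℝ^{n-1}`- and `y`-parts of `b`. Tangency to the
graph `y = u(|v|)` says
`⟨(u'(r)/r) (u(r) a + z c + b') + a, v⟩ = d z + β`, where `r = |v|`.
For fixed `r` and `z` the left-hand side is a linear form in `v`, constant on an open piece of a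
sphere of positive dimension, so the vector paired with `v` and the right-hand side both vanish.
Comparing powers of `z` leaves `d = β = 0`, `u' c = 0` and `u' (u a + b') + r a = 0`. If `a ≠ 0`,
the last equation makes the profile an arc of a circle centred on the axis; along such an arc the
translator equation would force `u` to be constant. So `a = 0`, and since `u'` cannot vanish
identically either, `b' = c = 0`.

Applied to `A = S J_α Sᵀ` and `b = -A q` this puts the conjugated basis into `so(n-1)`; it stays
orthonormal, hence spans by counting dimensions.
-/

open Filter
open scoped Topology RealInnerProductSpace

section Profile

/-- The graph of `u`, with derivative `u'`, is on no neighbourhood of `r₀` a horizontal segment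
or an arc of a circle centred on the axis `r = 0`. The circle with centre `(0, y)` is expressed
by the vanishing of half the derivative of `(u r - y) ^ 2 + r ^ 2`. These two profiles sweep out
hyperplanes and round cylinders, which have more rotational symmetries. -/
structure ProfileNondegenerateAt (u u' : ℝ → ℝ) (r₀ : ℝ) : Prop where
  hasDerivAt : ∀ᶠ r in 𝓝 r₀, HasDerivAt u (u' r) r
  not_flat : ¬ ∀ᶠ r in 𝓝 r₀, u' r = 0
  not_circular : ∀ y, ¬ ∀ᶠ r in 𝓝 r₀, u' r * (u r - y) + r = 0

variable {m r₀ y : ℝ} {u u' u'' : ℝ → ℝ}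

lemma eq_sub_of_translator_ode_of_circular {r h h' h'' : ℝ} (hr : r ≠ 0)
    (hode : h'' / (1 + h' ^ 2) + m * h' / r = 1) (hcirc : h' * (h - y) + r = 0)
    (hcirc' : h'' * (h - y) + h' * h' + 1 = 0) : h = y - (1 + m) := by
  have hpos : 1 + h' ^ 2 ≠ 0 := by positivity
  have curvature_term : h'' / (1 + h' ^ 2) * (h - y) = -1 := by
    field_simp
    linear_combination hcirc'
  have rotation_term : m * h' / r * (h - y) = -m := by
    field_simp
    linear_combination m * hcirc
  linear_combination (-(h - y)) * hode + curvature_term + rotation_term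

theorem profileNondegenerateAt_of_translator_ode (hr₀ : r₀ ≠ 0)
    (hu : ∀ᶠ r in 𝓝 r₀, HasDerivAt u (u' r) r)
    (hu' : ∀ᶠ r in 𝓝 r₀, HasDerivAt u' (u'' r) r)
    (hode : ∀ᶠ r in 𝓝 r₀, u'' r / (1 + u' r ^ 2) + m * u' r / r = 1) :
    ProfileNondegenerateAt u u' r₀ where
  hasDerivAt := hu
  not_flat hflat := by
    have hu''₀ : u'' r₀ = 0 :=
      hu'.self_of_nhds.unique ((hasDerivAt_const r₀ 0).congr_of_eventuallyEq hflat)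
    simpa [hu''₀, hflat.self_of_nhds] using hode.self_of_nhds
  not_circular y hcirc := by
    have hconst : u =ᶠ[𝓝 r₀] fun _ => y - (1 + m) := by
      filter_upwards [hu, hu', hode, hcirc.eventually_nhds, eventually_ne_nhds hr₀]
        with r hur hu'r hoder hcircr hr
      have hderiv := (hu'r.mul (hur.sub_const y)).add (hasDerivAt_id r)
      exact eq_sub_of_translator_ode_of_circular hr hoder hcircr.self_of_nhds
        (hderiv.unique ((hasDerivAt_const r 0).congr_of_eventuallyEq hcircr))
    have hu'₀ : u' r₀ = 0 :=
      hu.self_of_nhds.unique ((hasDerivAt_const r₀ _).congr_of_eventuallyEq hconst)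
    exact hr₀ (by simpa [hu'₀] using hcirc.self_of_nhds)

lemma hasDerivAt_derivWithin_Ici {E : Type*} [NormedAddCommGroup E] [NormedSpace ℝ E]
    {f : ℝ → E} {a r : ℝ} (hf : DifferentiableOn ℝ f (Set.Ici a)) (hr : a < r) :
    HasDerivAt f (derivWithin f (Set.Ici a) r) r :=
  (hf r hr.le).hasDerivWithinAt.hasDerivAt (Ici_mem_nhds hr)

theorem profileNondegenerateAt_of_contDiffOn_Ici (hu : ContDiffOn ℝ 2 u (Set.Ici 0))
    (hode : ∀ r > 0, derivWithin (derivWithin u (Set.Ici 0)) (Set.Ici 0) r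
        / (1 + derivWithin u (Set.Ici 0) r ^ 2)
      + m * derivWithin u (Set.Ici 0) r / r = 1)
    (hr₀ : 0 < r₀) :
    ProfileNondegenerateAt u (derivWithin u (Set.Ici 0)) r₀ := by
  have hu' : DifferentiableOn ℝ (derivWithin u (Set.Ici 0)) (Set.Ici 0) :=
    (hu.derivWithin (uniqueDiffOn_Ici 0) (m := 1) (by norm_num)).differentiableOn (by norm_num)
  have hpos : ∀ᶠ r in 𝓝 r₀, 0 < r := lt_mem_nhds hr₀
  exact profileNondegenerateAt_of_translator_ode hr₀.ne'
    (hpos.mono fun _ => hasDerivAt_derivWithin_Ici (hu.differentiableOn (by norm_num)))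
    (hpos.mono fun _ => hasDerivAt_derivWithin_Ici hu') (hpos.mono hode)

end Profile

section InnerProductSpace

variable {E : Type*} [NormedAddCommGroup E]

lemma eq_zero_of_eventually_smul_add_eq_zero [NormedSpace ℝ E] {b c : E} {z₀ : ℝ}
    (h : ∀ᶠ z in 𝓝 z₀, z • c + b = 0) : c = 0 ∧ b = 0 := by
  have hderiv : HasDerivAt (fun z : ℝ => z • c + b) c z₀ := by
    simpa using ((hasDerivAt_id z₀).smul_const c).add_const b
  have hc : c = 0 := hderiv.unique ((hasDerivAt_const z₀ 0).congr_of_eventuallyEq h)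
  exact ⟨hc, by simpa [hc] using h.self_of_nhds⟩

lemma eq_zero_of_eventually_mul_cos_add_mul_sin_eq {C D : ℝ}
    (h : ∀ᶠ t in 𝓝 0, C * Real.cos t + D * Real.sin t = C) : C = 0 ∧ D = 0 := by
  have hneg : ∀ᶠ t in 𝓝 (0 : ℝ), C * Real.cos (-t) + D * Real.sin (-t) = C :=
    (continuous_neg.tendsto' 0 0 neg_zero).eventually h
  have hlt : ∀ᶠ t in 𝓝 (0 : ℝ), t < Real.pi := gt_mem_nhds Real.pi_pos
  obtain ⟨t, ⟨ht, htneg, htpi⟩, ht0 : 0 < t⟩ :=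
    (((h.and (hneg.and hlt)).filter_mono nhdsWithin_le_nhds).and self_mem_nhdsWithin :
      ∀ᶠ t in 𝓝[>] (0 : ℝ), _).exists
  rw [Real.cos_neg, Real.sin_neg] at htneg
  have hsin : Real.sin t ≠ 0 := (Real.sin_pos_of_pos_of_lt_pi ht0 htpi).ne'
  have hcos : Real.cos t - 1 ≠ 0 := fun hcos =>
    hsin (Real.sin_eq_zero_iff_cos_eq.2 (Or.inl (sub_eq_zero.1 hcos)))
  have hC : C * (Real.cos t - 1) = 0 := by linear_combination (ht + htneg) / 2
  have hD : D * Real.sin t = 0 := by linear_combination (ht - htneg) / 2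
  exact ⟨(mul_eq_zero.1 hC).resolve_right hcos, (mul_eq_zero.1 hD).resolve_right hsin⟩

variable [InnerProductSpace ℝ E]

lemma norm_cos_smul_add_sin_smul {v e : E} (hve : ⟪v, e⟫ = 0) (hnorm : ‖e‖ = ‖v‖) (t : ℝ) :
    ‖Real.cos t • v + Real.sin t • e‖ = ‖v‖ := by
  rw [← sq_eq_sq₀ (norm_nonneg _) (norm_nonneg _), norm_add_sq_real, real_inner_smul_left,
    real_inner_smul_right, hve, norm_smul, norm_smul, hnorm, mul_pow, mul_pow, Real.norm_eq_abs,
    Real.norm_eq_abs, sq_abs, sq_abs]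
  linear_combination ‖v‖ ^ 2 * Real.sin_sq_add_cos_sq t

lemma exists_ne_zero_inner_eq_zero (hE : 1 < Module.rank ℝ E) (v : E) :
    ∃ e : E, e ≠ 0 ∧ ⟪v, e⟫ = 0 := by
  have hspan : (ℝ ∙ v)ᗮ ≠ ⊥ := fun hbot => by
    have htop : (ℝ ∙ v) = ⊤ := Submodule.orthogonal_eq_bot_iff.1 hbot
    exact hE.not_ge (rank_le_one_iff.2
      ⟨v, fun w => Submodule.mem_span_singleton.1 (htop ▸ Submodule.mem_top)⟩)
  obtain ⟨e, he, hne⟩ := Submodule.exists_mem_ne_zero_of_ne_bot hspan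
  exact ⟨e, hne, Submodule.mem_orthogonal_singleton_iff_inner_right.1 he⟩

variable {v₀ w : E} {k : ℝ}

lemma inner_eq_zero_of_eventually_inner_eq_on_sphere {e : E} (hv₀ : v₀ ≠ 0) (he : e ≠ 0)
    (hve : ⟪v₀, e⟫ = 0) (h : ∀ᶠ v in 𝓝 v₀, ‖v‖ = ‖v₀‖ → ⟪w, v⟫ = k) :
    ⟪w, v₀⟫ = 0 ∧ ⟪w, e⟫ = 0 := by
  have hs : ‖v₀‖ / ‖e‖ ≠ 0 := by positivity
  set e' := (‖v₀‖ / ‖e‖) • e with he'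
  have hnorm : ‖e'‖ = ‖v₀‖ := by
    rw [he', norm_smul, norm_div, norm_norm, norm_norm, div_mul_cancel₀ _ (norm_ne_zero_iff.2 he)]
  have hve' : ⟪v₀, e'⟫ = 0 := by rw [he', real_inner_smul_right, hve, mul_zero]
  have hcircle : Tendsto (fun t : ℝ => Real.cos t • v₀ + Real.sin t • e') (𝓝 0) (𝓝 v₀) :=
    Continuous.tendsto' (by fun_prop) _ _ (by simp)
  have hconst : ∀ᶠ t in 𝓝 0, ⟪w, v₀⟫ * Real.cos t + ⟪w, e'⟫ * Real.sin t = ⟪w, v₀⟫ := by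
    filter_upwards [hcircle.eventually h] with t ht
    have hinner := ht (norm_cos_smul_add_sin_smul hve' hnorm t)
    rw [inner_add_right, real_inner_smul_right, real_inner_smul_right] at hinner
    linear_combination hinner - h.self_of_nhds rfl
  obtain ⟨hwv, hwe⟩ := eq_zero_of_eventually_mul_cos_add_mul_sin_eq hconst
  rw [he', real_inner_smul_right] at hwe
  exact ⟨hwv, (mul_eq_zero.1 hwe).resolve_left hs⟩

theorem eq_zero_of_eventually_inner_eq_on_sphere (hE : 1 < Module.rank ℝ E) (hv₀ : v₀ ≠ 0)
    (h : ∀ᶠ v in 𝓝 v₀, ‖v‖ = ‖v₀‖ → ⟪w, v⟫ = k) : w = 0 := by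
  obtain ⟨e, he, hve⟩ := exists_ne_zero_inner_eq_zero hE v₀
  have hwv : ⟪w, v₀⟫ = 0 := (inner_eq_zero_of_eventually_inner_eq_on_sphere hv₀ he hve h).1
  by_contra hw
  have hww : ⟪w, w⟫ = 0 :=
    (inner_eq_zero_of_eventually_inner_eq_on_sphere hv₀ hw (real_inner_comm v₀ w ▸ hwv) h).2
  exact hw (inner_self_eq_zero.1 hww)

variable {u u' : ℝ → ℝ} {a b c : E} {d β z₀ : ℝ}

lemma eventually_smul_add_eq_zero_of_inner_eq (hE : 1 < Module.rank ℝ E) (hv₀ : v₀ ≠ 0)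
    (h : ∀ᶠ x : E × ℝ in 𝓝 (v₀, z₀),
      ⟪(u' ‖x.1‖ / ‖x.1‖) • (u ‖x.1‖ • a + x.2 • c + b) + a, x.1⟫ = d * x.2 + β) :
    ∀ᶠ x : E × ℝ in 𝓝 (v₀, z₀),
      (u' ‖x.1‖ / ‖x.1‖) • (u ‖x.1‖ • a + x.2 • c + b) + a = 0 ∧ d * x.2 + β = 0 := by
  have hne : ∀ᶠ x : E × ℝ in 𝓝 (v₀, z₀), x.1 ≠ 0 :=
    continuous_fst.continuousAt.eventually_ne hv₀
  filter_upwards [h.eventually_nhds, hne] with x hx hx0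
  have hslice : Tendsto (fun v : E => (v, x.2)) (𝓝 x.1) (𝓝 x) :=
    Continuous.tendsto' (by fun_prop) _ _ rfl
  have hcoeff := eq_zero_of_eventually_inner_eq_on_sphere hE hx0
    ((hslice.eventually hx).mono fun v hv hnorm => by simpa only [hnorm] using hv)
  refine ⟨hcoeff, ?_⟩
  rw [← hx.self_of_nhds, hcoeff, inner_zero_left]

lemma eventually_profile_eq_zero_of_smul_add_eq_zero (hv₀ : v₀ ≠ 0)
    (h : ∀ᶠ x : E × ℝ in 𝓝 (v₀, z₀),
      (u' ‖x.1‖ / ‖x.1‖) • (u ‖x.1‖ • a + x.2 • c + b) + a = 0) :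
    ∀ᶠ r in 𝓝 ‖v₀‖, u' r • c = 0 ∧ u' r • (u r • a + b) + r • a = 0 := by
  have hnorm₀ : 0 < ‖v₀‖ := norm_pos_iff.2 hv₀
  have hray : Tendsto (fun x : ℝ × ℝ => ((x.1 / ‖v₀‖) • v₀, x.2)) (𝓝 (‖v₀‖, z₀)) (𝓝 (v₀, z₀)) :=
    Continuous.tendsto' (by fun_prop) _ _ (by simp [hnorm₀.ne'])
  have hpolar := (hray.eventually h).curry_nhds
  filter_upwards [hpolar, lt_mem_nhds hnorm₀] with r hr hrpos
  have hnorm : ‖(r / ‖v₀‖) • v₀‖ = r := by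
    rw [norm_smul, Real.norm_of_nonneg (by positivity), div_mul_cancel₀ _ hnorm₀.ne']
  simp only [hnorm] at hr
  refine eq_zero_of_eventually_smul_add_eq_zero (hr.mono fun z hz => ?_)
  calc z • u' r • c + (u' r • (u r • a + b) + r • a)
      = r • ((u' r / r) • (u r • a + z • c + b) + a) := by
        rw [smul_add r, smul_smul r, mul_div_cancel₀ _ hrpos.ne']
        module
    _ = 0 := by rw [hz, smul_zero]

lemma ProfileNondegenerateAt.eq_zero_of_eventually_smul_eq_zero {r₀ : ℝ}
    (hprofile : ProfileNondegenerateAt u u' r₀) (h : ∀ᶠ r in 𝓝 r₀, u' r • c = 0) : c = 0 := by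
  by_contra hc
  exact hprofile.not_flat (h.mono fun r hr => (smul_eq_zero.1 hr).resolve_right hc)

lemma ProfileNondegenerateAt.eq_zero_of_eventually_circular {r₀ : ℝ}
    (hprofile : ProfileNondegenerateAt u u' r₀)
    (h : ∀ᶠ r in 𝓝 r₀, u' r • (u r • a + b) + r • a = 0) : a = 0 ∧ b = 0 := by
  have ha : a = 0 := by
    by_contra ha
    have hnorm : ⟪a, a⟫ ≠ 0 := inner_self_ne_zero.2 ha
    refine hprofile.not_circular (-(⟪b, a⟫ / ⟪a, a⟫)) (h.mono fun r hr => ?_)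
    have hinner : u' r * (u r * ⟪a, a⟫ + ⟪b, a⟫) + r * ⟪a, a⟫ = 0 := by
      simpa only [inner_add_left, real_inner_smul_left, inner_zero_left]
        using congrArg (⟪·, a⟫) hr
    field_simp
    linear_combination hinner
  exact ⟨ha, hprofile.eq_zero_of_eventually_smul_eq_zero
    (h.mono fun r hr => by simpa only [ha, smul_zero, zero_add, add_zero] using hr)⟩

theorem ProfileNondegenerateAt.eq_zero_of_eventually_inner_eq
    (hprofile : ProfileNondegenerateAt u u' ‖v₀‖) (hE : 1 < Module.rank ℝ E) (hv₀ : v₀ ≠ 0)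
    (h : ∀ᶠ x : E × ℝ in 𝓝 (v₀, z₀),
      ⟪(u' ‖x.1‖ / ‖x.1‖) • (u ‖x.1‖ • a + x.2 • c + b) + a, x.1⟫ = d * x.2 + β) :
    (a = 0 ∧ b = 0 ∧ c = 0) ∧ d = 0 ∧ β = 0 := by
  have hzero := eventually_smul_add_eq_zero_of_inner_eq hE hv₀ h
  have hpolar :=
    eventually_profile_eq_zero_of_smul_add_eq_zero hv₀ (hzero.mono fun _ hx => hx.1)
  have haxis : ∀ᶠ z in 𝓝 z₀, z • d + β = 0 :=
    hzero.curry_nhds.self_of_nhds.mono fun z hz => by rw [smul_eq_mul, mul_comm]; exact hz.2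
  obtain ⟨ha, hb⟩ := hprofile.eq_zero_of_eventually_circular (hpolar.mono fun _ hr => hr.2)
  have hc := hprofile.eq_zero_of_eventually_smul_eq_zero (hpolar.mono fun _ hr => hr.1)
  exact ⟨⟨ha, hb, hc⟩, eq_zero_of_eventually_smul_add_eq_zero haxis⟩

end InnerProductSpace

section LinearAlgebra

variable {ι l m R : Type*} [Fintype m] [CommRing R]

lemma transpose_mul_mul_transpose_eq_neg {A : Matrix m m R} (hA : Aᵀ = -A)
    (S : Matrix l m R) : (S * A * Sᵀ)ᵀ = -(S * A * Sᵀ) := by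
  rw [transpose_mul, transpose_mul, transpose_transpose, hA, Matrix.neg_mul, Matrix.mul_neg,
    Matrix.mul_assoc]

lemma trace_mul_mul_transpose_mul_transpose [DecidableEq m] {S : Matrix m m R} (hS : S * Sᵀ = 1)
    (A B : Matrix m m R) :
    trace (S * A * Sᵀ * (S * B * Sᵀ)ᵀ) = trace (A * Bᵀ) := by
  have hS' : Sᵀ * S = 1 := mul_eq_one_comm.1 hS
  calc trace (S * A * Sᵀ * (S * B * Sᵀ)ᵀ) = trace (S * (A * (Sᵀ * S) * Bᵀ * Sᵀ)) := by
        simp only [transpose_mul, transpose_transpose, Matrix.mul_assoc]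
    _ = trace (A * Bᵀ) := by
        rw [trace_mul_comm, hS', Matrix.mul_one, Matrix.mul_assoc, hS', Matrix.mul_one]

lemma linearIndependent_of_trace_mul_transpose_eq_ite [DecidableEq ι] {T : ι → Matrix l m R}
    [Fintype l] (hT : ∀ α β, trace (T α * (T β)ᵀ) = if α = β then 1 else 0) :
    LinearIndependent R T := by
  refine linearIndependent_iff'.2 fun s g hg β hβ => ?_
  have htrace := congrArg (fun B => trace (B * (T β)ᵀ)) hg
  simpa [Matrix.sum_mul, trace_sum, hT, hβ] using htrace

lemma span_range_eq_of_linearIndependent {k V : Type*} [Field k] [AddCommGroup V] [Module k V]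
    [Finite ι] {T J : ι → V} (hT : LinearIndependent k T)
    (hmem : ∀ α, T α ∈ Submodule.span k (Set.range J)) :
    Submodule.span k (Set.range T) = Submodule.span k (Set.range J) := by
  have := Fintype.ofFinite ι
  have := FiniteDimensional.span_of_finite k (Set.finite_range J)
  refine Submodule.eq_of_le_of_finrank_le (Submodule.span_le.2 (Set.range_subset_iff.2 hmem)) ?_
  rw [finrank_span_eq_card hT]
  exact finrank_range_le_card J

lemma apply_self_eq_zero_of_transpose_eq_neg [CharZero R] [NoZeroDivisors R] {A : Matrix l l R}
    (hA : Aᵀ = -A) (i : l) : A i i = 0 :=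
  self_eq_neg.1 (congrFun₂ hA i i)

lemma mulVec_dotProduct_self_of_transpose_eq_neg [CharZero R] [NoZeroDivisors R]
    {A : Matrix m m R} (hA : Aᵀ = -A) (x : m → R) : A *ᵥ x ⬝ᵥ x = 0 := by
  refine self_eq_neg.1 ?_
  calc A *ᵥ x ⬝ᵥ x = Aᵀ *ᵥ x ⬝ᵥ x := by
        rw [dotProduct_comm, dotProduct_mulVec, mulVec_transpose]
    _ = -(A *ᵥ x ⬝ᵥ x) := by rw [hA, neg_mulVec, neg_dotProduct]

lemma mulVec_apply_eq_neg_col_dotProduct {A : Matrix m m R} (hA : Aᵀ = -A) (x : m → R)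
    (i : m) : (A *ᵥ x) i = -(A.col i ⬝ᵥ x) := by
  rw [← neg_dotProduct]
  exact congrArg (· ⬝ᵥ x) (funext fun j => congrFun₂ (neg_eq_iff_eq_neg.2 hA).symm i j)

lemma sum_filter_univ_eq_sum_subtype {M : Type*} [AddCommMonoid M] (P : m → Prop) [DecidablePred P]
    (f : m → M) : ∑ i ∈ Finset.univ.filter P, f i = ∑ i : {i // P i}, f i :=
  Finset.sum_subtype _ (fun i => by simp) f

end LinearAlgebra

section Coordinates

variable {n : ℕ}

/-- The index of `x_n`, the coordinate along the axis of the bowl. -/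
abbrev heightIndex (n : ℕ) : Fin (n + 1) := ⟨n - 1, by omega⟩

/-- The factor `ℝ^{n-1}` of the first `n - 1` coordinates of `ℝ^{n+1}`, with its Euclidean norm. -/
abbrev RadialSpace (n : ℕ) : Type := EuclideanSpace ℝ {i : Fin (n + 1) // (i : ℕ) < n - 1}

/-- The projection `x ↦ x̄` onto the first `n - 1` coordinates; `‖radialPart n x‖` is `|x̄|`. -/
def radialPart (n : ℕ) : (Fin (n + 1) → ℝ) →ₗ[ℝ] RadialSpace n :=
  (WithLp.linearEquiv 2 ℝ _).symm.toLinearMap ∘ₗ LinearMap.funLeft ℝ ℝ Subtype.val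

/-- The point `(v, y, z)` of `ℝ^{n+1} = ℝ^{n-1} × ℝ × ℝ`. -/
def ofCylindrical (v : RadialSpace n) (y z : ℝ) : Fin (n + 1) → ℝ :=
  fun i => if h : (i : ℕ) < n - 1 then v ⟨i, h⟩ else if (i : ℕ) = n - 1 then y else z

/-- The normal `(u'(|x̄|) x̄ / |x̄|, -1, 0)` of `bowlTimesR n u` at `x`, where `u'` is the
derivative of `u`. It is not normalized to unit length. -/
noncomputable def graphNormal (n : ℕ) (u' : ℝ → ℝ) (x : Fin (n + 1) → ℝ) : Fin (n + 1) → ℝ :=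
  ofCylindrical ((u' (rbar n x) / rbar n x) • radialPart n x) (-1) 0

@[simp]
lemma radialPart_apply (x : Fin (n + 1) → ℝ) (i : {i : Fin (n + 1) // (i : ℕ) < n - 1}) :
    radialPart n x i = x i := rfl

lemma norm_radialPart (x : Fin (n + 1) → ℝ) : ‖radialPart n x‖ = rbar n x := by
  simp [EuclideanSpace.norm_eq, rbar, sum_filter_univ_eq_sum_subtype]

lemma radialPart_ne_zero {x : Fin (n + 1) → ℝ} (hx : 0 < rbar n x) : radialPart n x ≠ 0 :=
  norm_pos_iff.1 (norm_radialPart x ▸ hx)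

lemma one_lt_rank_radialSpace (hn : 3 ≤ n) :
    1 < Module.rank ℝ (RadialSpace n) := by
  have hcard : Nontrivial {i : Fin (n + 1) // (i : ℕ) < n - 1} :=
    ⟨⟨⟨0, by omega⟩, by simp; omega⟩, ⟨⟨1, by omega⟩, by simp; omega⟩, by simp⟩
  rw [← Module.finrank_eq_rank, finrank_euclideanSpace]
  exact_mod_cast Fintype.one_lt_card

section ofCylindrical

variable (v : RadialSpace n) (y z : ℝ)

@[simp]
lemma radialPart_ofCylindrical : radialPart n (ofCylindrical v y z) = v := by
  ext i
  simp [ofCylindrical, i.2]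

@[simp]
lemma ofCylindrical_heightIndex : ofCylindrical v y z (heightIndex n) = y := by
  simp [ofCylindrical]

@[simp]
lemma ofCylindrical_last (hn : n ≠ 0) : ofCylindrical v y z (Fin.last n) = z := by
  simp [ofCylindrical, show ¬ n < n - 1 by omega, show n ≠ n - 1 by omega]

end ofCylindrical

lemma continuous_ofCylindrical :
    Continuous fun x : RadialSpace n × ℝ × ℝ => ofCylindrical x.1 x.2.1 x.2.2 := by
  refine continuous_pi fun i => ?_
  unfold ofCylindrical
  split_ifs <;> fun_prop

lemma eq_heightIndex_or_eq_last {i : Fin (n + 1)} (hi : ¬ (i : ℕ) < n - 1) :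
    i = heightIndex n ∨ i = Fin.last n := by
  simp only [Fin.ext_iff, Fin.val_last]
  omega

lemma ofCylindrical_radialPart (hn : n ≠ 0) (x : Fin (n + 1) → ℝ) :
    ofCylindrical (radialPart n x) (x (heightIndex n)) (x (Fin.last n)) = x := by
  ext i
  by_cases hi : (i : ℕ) < n - 1
  · simp [ofCylindrical, hi]
  · rcases eq_heightIndex_or_eq_last hi with rfl | rfl
    · simp
    · simp [hn]

lemma dotProduct_eq_inner_radialPart (hn : n ≠ 0) (x w : Fin (n + 1) → ℝ) :
    x ⬝ᵥ w = ⟪radialPart n x, radialPart n w⟫ + x (heightIndex n) * w (heightIndex n)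
      + x (Fin.last n) * w (Fin.last n) := by
  have hcompl : Finset.univ.filter (fun i : Fin (n + 1) => ¬ (i : ℕ) < n - 1)
      = {heightIndex n, Fin.last n} := by
    ext i
    simp only [Finset.mem_filter, Finset.mem_univ, true_and, Finset.mem_insert,
      Finset.mem_singleton, Fin.ext_iff, Fin.val_last]
    omega
  have hne : heightIndex n ≠ Fin.last n := by
    simp only [ne_eq, Fin.ext_iff, Fin.val_last]
    omega
  rw [dotProduct, ← Finset.sum_filter_add_sum_filter_not _ fun i : Fin (n + 1) => (i : ℕ) < n - 1,
    hcompl, Finset.sum_pair hne, sum_filter_univ_eq_sum_subtype,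
    ← add_assoc, PiLp.inner_apply]
  simp [mul_comm]

lemma dotProduct_graphNormal (hn : n ≠ 0) (u' : ℝ → ℝ) (w x : Fin (n + 1) → ℝ) :
    w ⬝ᵥ graphNormal n u' x
      = u' (rbar n x) / rbar n x * ⟪radialPart n w, radialPart n x⟫ - w (heightIndex n) := by
  rw [dotProduct_eq_inner_radialPart hn, graphNormal, radialPart_ofCylindrical,
    ofCylindrical_heightIndex, ofCylindrical_last _ _ _ hn, real_inner_smul_right]
  ring

lemma dotProduct_graphNormal_eq_sum (hn : n ≠ 0) (u' : ℝ → ℝ) (w x : Fin (n + 1) → ℝ) :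
    w ⬝ᵥ graphNormal n u' x
      = ∑ i ∈ Finset.univ.filter (fun i : Fin (n + 1) => (i : ℕ) < n - 1),
          w i * (u' (rbar n x) * x i / rbar n x) - w (heightIndex n) := by
  rw [dotProduct_graphNormal hn, PiLp.inner_apply, Finset.mul_sum, sum_filter_univ_eq_sum_subtype]
  congr 1
  refine Finset.sum_congr rfl fun i _ => ?_
  simp only [radialPart_apply, RCLike.inner_apply, conj_trivial]
  ring

end Coordinates

section SkewFields

variable {n : ℕ} {A : Matrix (Fin (n + 1)) (Fin (n + 1)) ℝ} {u u' : ℝ → ℝ}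
  {b p q : Fin (n + 1) → ℝ}

lemma dotProduct_graphNormal_of_skew (hn : n ≠ 0) (hA : Aᵀ = -A) (b x : Fin (n + 1) → ℝ) :
    (A *ᵥ x + b) ⬝ᵥ graphNormal n u' x
      = ⟪(u' (rbar n x) / rbar n x) • (x (heightIndex n) • radialPart n (A.col (heightIndex n))
            + x (Fin.last n) • radialPart n (A.col (Fin.last n)) + radialPart n b)
          + radialPart n (A.col (heightIndex n)), radialPart n x⟫
        - (A (heightIndex n) (Fin.last n) * x (Fin.last n) + b (heightIndex n)) := by
  have hdiag := apply_self_eq_zero_of_transpose_eq_neg hA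
  have hanti : A (Fin.last n) (heightIndex n) = -A (heightIndex n) (Fin.last n) :=
    congrFun₂ hA (heightIndex n) (Fin.last n)
  have hheight : (A *ᵥ x) (heightIndex n) = -⟪radialPart n (A.col (heightIndex n)), radialPart n x⟫
      + A (heightIndex n) (Fin.last n) * x (Fin.last n) := by
    rw [mulVec_apply_eq_neg_col_dotProduct hA, dotProduct_eq_inner_radialPart hn, col_apply,
      col_apply, hdiag, hanti]
    ring
  have hlast : (A *ᵥ x) (Fin.last n) = -⟪radialPart n (A.col (Fin.last n)), radialPart n x⟫
      - A (heightIndex n) (Fin.last n) * x (heightIndex n) := by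
    rw [mulVec_apply_eq_neg_col_dotProduct hA, dotProduct_eq_inner_radialPart hn, col_apply,
      col_apply, hdiag]
    ring
  -- `⟨A x, x⟩ = 0` determines `⟨(A x)‾, x̄⟩` without reference to the block of `A` acting on `x̄`.
  have hquad := mulVec_dotProduct_self_of_transpose_eq_neg hA x
  rw [dotProduct_eq_inner_radialPart hn, hheight, hlast] at hquad
  rw [dotProduct_graphNormal hn, map_add, Pi.add_apply, hheight]
  simp only [inner_add_left, real_inner_smul_left]
  linear_combination (u' (rbar n x) / rbar n x) * hquad

lemma tendsto_ofCylindrical_graph (hn : n ≠ 0) (hu : ContinuousAt u (rbar n p))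
    (hp : p ∈ bowlTimesR n u) :
    Tendsto (fun x : RadialSpace n × ℝ =>
        ofCylindrical x.1 (u ‖x.1‖) x.2)
      (𝓝 (radialPart n p, p (Fin.last n))) (𝓝[bowlTimesR n u] p) := by
  have hbase : ofCylindrical (radialPart n p) (u ‖radialPart n p‖) (p (Fin.last n)) = p := by
    rw [norm_radialPart, ← show p (heightIndex n) = u (rbar n p) from hp,
      ofCylindrical_radialPart hn]
  refine tendsto_nhdsWithin_iff.2 ⟨?_, Eventually.of_forall fun x => ?_⟩
  · have hheight : ContinuousAt (fun x : RadialSpace n × ℝ => u ‖x.1‖)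
        (radialPart n p, p (Fin.last n)) :=
      ContinuousAt.comp (f := fun x : RadialSpace n × ℝ => ‖x.1‖)
        (by rwa [norm_radialPart]) (by fun_prop)
    have hcomp := continuous_ofCylindrical.continuousAt.comp
      (continuousAt_fst.prodMk (hheight.prodMk continuousAt_snd))
    rwa [ContinuousAt, Function.comp_apply, hbase] at hcomp
  · change ofCylindrical x.1 (u ‖x.1‖) x.2 (heightIndex n) = u (rbar n _)
    rw [ofCylindrical_heightIndex, ← norm_radialPart, radialPart_ofCylindrical]

theorem eq_zero_of_eventually_tangent (hn : 3 ≤ n) (hA : Aᵀ = -A) (hpM : p ∈ bowlTimesR n u)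
    (hp : 0 < rbar n p) (hprofile : ProfileNondegenerateAt u u' (rbar n p))
    (htangent : ∀ᶠ x in 𝓝[bowlTimesR n u] p, (A *ᵥ x + b) ⬝ᵥ graphNormal n u' x = 0) :
    (radialPart n (A.col (heightIndex n)) = 0 ∧ radialPart n b = 0 ∧
        radialPart n (A.col (Fin.last n)) = 0) ∧
      A (heightIndex n) (Fin.last n) = 0 ∧ b (heightIndex n) = 0 := by
  have hn₀ : n ≠ 0 := by omega
  have hgraph := tendsto_ofCylindrical_graph hn₀ hprofile.hasDerivAt.self_of_nhds.continuousAt hpM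
  rw [← norm_radialPart] at hprofile
  refine hprofile.eq_zero_of_eventually_inner_eq (one_lt_rank_radialSpace hn)
    (radialPart_ne_zero hp) ((hgraph.eventually htangent).mono fun x hx => ?_)
  rw [dotProduct_graphNormal_of_skew hn₀ hA, ← norm_radialPart, radialPart_ofCylindrical,
    ofCylindrical_heightIndex, ofCylindrical_last _ _ _ hn₀] at hx
  exact sub_eq_zero.1 hx

lemma memSOnm1_of_radialPart_col_eq_zero (hA : Aᵀ = -A)
    (hheight : radialPart n (A.col (heightIndex n)) = 0)
    (hlast : radialPart n (A.col (Fin.last n)) = 0)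
    (hcorner : A (heightIndex n) (Fin.last n) = 0) : memSOnm1 n A := by
  have hanti : ∀ i j, A i j = -A j i := fun i j => congrFun₂ hA j i
  have hcol : ∀ i j : Fin (n + 1), n - 1 ≤ (j : ℕ) → A i j = 0 := by
    intro i j hj
    by_cases hi : (i : ℕ) < n - 1
    · rcases eq_heightIndex_or_eq_last hj.not_gt with rfl | rfl
      · exact congrArg (· ⟨i, hi⟩) hheight
      · exact congrArg (· ⟨i, hi⟩) hlast
    · rcases eq_heightIndex_or_eq_last hj.not_gt with rfl | rfl <;>
        rcases eq_heightIndex_or_eq_last hi with rfl | rfl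
      · exact apply_self_eq_zero_of_transpose_eq_neg hA _
      · rw [hanti, hcorner, neg_zero]
      · exact hcorner
      · exact apply_self_eq_zero_of_transpose_eq_neg hA _
  exact ⟨hA, fun i j hij => hij.elim (fun hi => by rw [hanti, hcol j i hi, neg_zero]) (hcol i j)⟩

theorem memSOnm1_and_mulVec_eq_zero_of_eventually_tangent (hn : 3 ≤ n) (hA : Aᵀ = -A)
    (hpM : p ∈ bowlTimesR n u) (hp : 0 < rbar n p)
    (hprofile : ProfileNondegenerateAt u u' (rbar n p))
    (htangent : ∀ᶠ x in 𝓝[bowlTimesR n u] p, A *ᵥ (x - q) ⬝ᵥ graphNormal n u' x = 0) :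
    memSOnm1 n A ∧ A *ᵥ q = 0 := by
  have haffine : ∀ x, A *ᵥ (x - q) = A *ᵥ x + -(A *ᵥ q) := fun x => by
    rw [mulVec_sub, sub_eq_add_neg]
  simp only [haffine] at htangent
  obtain ⟨⟨hheight, hradial, hlast⟩, hcorner, -⟩ :=
    eq_zero_of_eventually_tangent hn hA hpM hp hprofile htangent
  have hmem := memSOnm1_of_radialPart_col_eq_zero hA hheight hlast hcorner
  refine ⟨hmem, funext fun i => ?_⟩
  by_cases hi : (i : ℕ) < n - 1
  · exact neg_eq_zero.1 (congrArg (· ⟨i, hi⟩) hradial)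
  · have hrow : A i = 0 := funext fun j => hmem.2 i j (Or.inl (by omega))
    rw [mulVec, hrow, zero_dotProduct, Pi.zero_apply]

end SkewFields

theorem bowl_rotation_vector_fields_normalize_general {n : ℕ} (hn : 3 ≤ n) {u u' : ℝ → ℝ}
    {ι : Type*} [Fintype ι] [DecidableEq ι]
    {J : ι → Matrix (Fin (n + 1)) (Fin (n + 1)) ℝ}
    (hJmem : ∀ α, memSOnm1 n (J α))
    (hJorth : ∀ α β, trace (J α * (J β)ᵀ) = if α = β then 1 else 0)
    (hJspan : ∀ B, memSOnm1 n B → ∃ c : ι → ℝ, B = ∑ α, c α • J α)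
    {S : Matrix (Fin (n + 1)) (Fin (n + 1)) ℝ} (hS : S * Sᵀ = 1)
    {q : Fin (n + 1) → ℝ} {K : ι → (Fin (n + 1) → ℝ) → Fin (n + 1) → ℝ}
    (hK : ∀ α x, K α x = (S * J α * Sᵀ) *ᵥ (x - q))
    {p : Fin (n + 1) → ℝ} (hpM : p ∈ bowlTimesR n u) (hp : 0 < rbar n p)
    (hprofile : ProfileNondegenerateAt u u' (rbar n p))
    (htangent : ∀ α, ∀ᶠ x in 𝓝[bowlTimesR n u] p, K α x ⬝ᵥ graphNormal n u' x = 0) :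
    (∀ α, memSOnm1 n (S * J α * Sᵀ)) ∧
    (∀ α, (S * J α * Sᵀ) *ᵥ q = 0) ∧
    (∀ α x, K α x = (S * J α * Sᵀ) *ᵥ x) ∧
    (∀ α β, trace ((S * J α * Sᵀ) * (S * J β * Sᵀ)ᵀ) = if α = β then 1 else 0) ∧
    (∀ B, memSOnm1 n B → ∃ c : ι → ℝ, B = ∑ α, c α • (S * J α * Sᵀ)) := by
  have hrigid := fun α => memSOnm1_and_mulVec_eq_zero_of_eventually_tangent hn
    (transpose_mul_mul_transpose_eq_neg (hJmem α).1 S) hpM hp hprofile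
    ((htangent α).mono fun x hx => by rwa [hK] at hx)
  have horth : ∀ α β, trace ((S * J α * Sᵀ) * (S * J β * Sᵀ)ᵀ) = if α = β then 1 else 0 :=
    fun α β => (trace_mul_mul_transpose_mul_transpose hS _ _).trans (hJorth α β)
  have hmem_span : ∀ B, memSOnm1 n B → B ∈ Submodule.span ℝ (Set.range J) := fun B hB => by
    obtain ⟨c, rfl⟩ := hJspan B hB
    exact (Submodule.mem_span_range_iff_exists_fun ℝ).2 ⟨c, rfl⟩
  have hindep : LinearIndependent ℝ fun α => S * J α * Sᵀ :=
    linearIndependent_of_trace_mul_transpose_eq_ite horth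
  have hspan := span_range_eq_of_linearIndependent hindep fun α => hmem_span _ (hrigid α).1
  refine ⟨fun α => (hrigid α).1, fun α => (hrigid α).2, fun α x => ?_, horth, fun B hB => ?_⟩
  · rw [hK, mulVec_sub, (hrigid α).2, sub_zero]
  · have hB' := hmem_span B hB
    rw [← hspan, Submodule.mem_span_range_iff_exists_fun] at hB'
    obtain ⟨c, hc⟩ := hB'
    exact ⟨c, hc.symm⟩

/-- Let `n ≥ 4`, `u` the Bowl soliton profile (C² on `[0,∞)`,
`u(0) = u'(0) = 0`, `u'' ≥ 0`, satisfying `u''/(1+u'²) + (n−1)u'/r = 1`), `{J_α}` an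
orthonormal basis of `so(n−1)`, `S` orthogonal, `q ∈ ℝ^{n+1}`, and
`K_α(x) = S J_α S⁻¹ (x − q)`.  If `⟨K_α(x), ν(x)⟩ = 0` for all `x` in a nonempty
relatively open subset `U` of `M = Bowl^{n−1} × ℝ` consisting of points with `x̄ ≠ 0`
(with `ν(x) = (1+u'²)^{−1/2}(u' x̄/|x̄|, −1, 0)`), then each `S J_α S⁻¹ ∈ so(n−1)`,
`S J_α S⁻¹ q = 0`, hence `K_α(x) = (S J_α S⁻¹) x`, and the matrices `{S J_α S⁻¹}` form an
orthonormal basis of `so(n−1)`. -/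
theorem bowl_rotation_vector_fields_normalize
    (n : ℕ) (hn : 4 ≤ n)
    (u : ℝ → ℝ)
    (huC2 : ContDiffOn ℝ 2 u (Set.Ici 0))
    (hu0 : u 0 = 0)
    (hu'0 : derivWithin u (Set.Ici 0) 0 = 0)
    (hu'' : ∀ r ≥ (0:ℝ), 0 ≤ derivWithin (derivWithin u (Set.Ici 0)) (Set.Ici 0) r)
    (hODE : ∀ r > (0:ℝ),
      derivWithin (derivWithin u (Set.Ici 0)) (Set.Ici 0) r
          / (1 + (derivWithin u (Set.Ici 0) r) ^ 2)
        + (n - 1 : ℝ) * derivWithin u (Set.Ici 0) r / r = 1)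
    (J : Fin ((n - 1) * (n - 2) / 2) → Matrix (Fin (n + 1)) (Fin (n + 1)) ℝ)
    (hJmem : ∀ α, memSOnm1 n (J α))
    (hJorth : ∀ α β, Matrix.trace (J α * (J β)ᵀ) = if α = β then 1 else 0)
    (hJspan : ∀ B, memSOnm1 n B →
      ∃ c : Fin ((n - 1) * (n - 2) / 2) → ℝ, B = ∑ α, c α • J α)
    (S : Matrix (Fin (n + 1)) (Fin (n + 1)) ℝ) (hS : S * Sᵀ = 1)
    (q : Fin (n + 1) → ℝ)
    (K : Fin ((n - 1) * (n - 2) / 2) → (Fin (n + 1) → ℝ) → Fin (n + 1) → ℝ)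
    (hK : ∀ α x, K α x = (S * J α * Sᵀ).mulVec (x - q))
    (U : Set (Fin (n + 1) → ℝ))
    (hUsub : U ⊆ bowlTimesR n u)
    (hUxbar : ∀ x ∈ U, 0 < rbar n x)
    (hUrelOpen : ∃ V : Set (Fin (n + 1) → ℝ), IsOpen V ∧ U = V ∩ bowlTimesR n u)
    (hUne : U.Nonempty)
    (hnormal : ∀ x ∈ U, ∀ α,
      (Real.sqrt (1 + (derivWithin u (Set.Ici 0) (rbar n x)) ^ 2))⁻¹ *
        ((∑ i ∈ Finset.univ.filter (fun i : Fin (n + 1) => (i : ℕ) < n - 1),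
            K α x i * (derivWithin u (Set.Ici 0) (rbar n x) * x i / rbar n x))
          - K α x ⟨n - 1, by omega⟩) = 0) :
    (∀ α, memSOnm1 n (S * J α * Sᵀ)) ∧
    (∀ α, (S * J α * Sᵀ).mulVec q = 0) ∧
    (∀ α x, K α x = (S * J α * Sᵀ).mulVec x) ∧
    (∀ α β, Matrix.trace ((S * J α * Sᵀ) * (S * J β * Sᵀ)ᵀ) = if α = β then 1 else 0) ∧
    (∀ B, memSOnm1 n B →
      ∃ c : Fin ((n - 1) * (n - 2) / 2) → ℝ, B = ∑ α, c α • (S * J α * Sᵀ)) := by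
  obtain ⟨V, hV, rfl⟩ := hUrelOpen
  obtain ⟨p, hp⟩ := hUne
  have hVp : ∀ᶠ x in 𝓝[bowlTimesR n u] p, x ∈ V ∩ bowlTimesR n u :=
    inter_mem (mem_nhdsWithin_of_mem_nhds (hV.mem_nhds hp.1)) self_mem_nhdsWithin
  refine bowl_rotation_vector_fields_normalize_general (by omega) hJmem hJorth hJspan hS hK hp.2
    (hUxbar p hp) (profileNondegenerateAt_of_contDiffOn_Ici huC2 hODE (hUxbar p hp))
    fun α => hVp.mono fun x hx => ?_
  rw [dotProduct_graphNormal_eq_sum (by omega)]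
  exact (mul_eq_zero.1 (hnormal x hx α)).resolve_left (by positivity)
end

section
/- Let n ≥ 3, let {J_α : 1 ≤ α ≤ (n−1)(n−2)/2} be an orthonormal basis of so(n−1), let A be a skew-symmetric real (n+1)×(n+1) matrix orthogonal to so(n−1) ⊕ so(2) with respect to ⟨A, B⟩ = Tr(A Bᵀ) (equivalently, A_{ij} = 0 whenever both i, j ≤ n−1 and whenever both i, j ∈ {n, n+1}), and for each α let c_α ∈ ℝ^{n+1} be a vector whose last two coordinates vanish. If there is a nonempty relatively open subset U of the cylinder C such that ⟨[A, J_α] x + c_α, ν(x)⟩ = 0 for every x ∈ U and every α (where [A, J_α] = A J_α − J_α A), then A = 0 and c_α = 0 for every α. -/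
open Matrix

/-!
A skew affine field `x ↦ M x + b` which is tangent to the cylinder over the coordinates `S`, even
only near one point, has `b = 0` on `S` and no entries `M i k` with `i ∈ S`, `k ∉ S`. Indeed,
translating `x` along a free axis `e k` stays on the cylinder and changes the normal part of the
field by a multiple of the linear form `∑ i ∈ S, M i k * x i`; and a linear form that vanishes near
a point of the cylinder vanishes identically, because the cylinder meets every ray close to that
point. By skewness the `S × S` block contributes nothing, leaving the linear form
`∑ i ∈ S, b i * x i`.

Applied to `M = [A, J α]` this shows that `[A, B] i k = 0` for all `B ∈ so(S)`. For
`B = E i j - E j i` that entry is `-A j k`.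
-/

open Filter Topology

section Algebra

variable {ι R : Type*} [CommRing R]

/-- The copy of `so(S)` inside the skew-symmetric matrices indexed by `ι`: those whose entries
vanish outside the `S × S` block. -/
def blockSO (R : Type*) [CommRing R] (S : Finset ι) : Submodule R (Matrix ι ι R) where
  carrier := {B | Bᵀ = -B ∧ ∀ i j, (i ∉ S ∨ j ∉ S) → B i j = 0}
  zero_mem' := by simp
  add_mem' := by
    rintro B C ⟨hB, hB₀⟩ ⟨hC, hC₀⟩
    refine ⟨by rw [transpose_add, hB, hC, neg_add], fun i j hij => ?_⟩
    rw [Matrix.add_apply, hB₀ i j hij, hC₀ i j hij, add_zero]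
  smul_mem' := by
    rintro r B ⟨hB, hB₀⟩
    refine ⟨by rw [transpose_smul, hB, smul_neg], fun i j hij => ?_⟩
    rw [Matrix.smul_apply, hB₀ i j hij, smul_zero]

theorem mem_blockSO {S : Finset ι} {B : Matrix ι ι R} :
    B ∈ blockSO R S ↔ Bᵀ = -B ∧ ∀ i j, (i ∉ S ∨ j ∉ S) → B i j = 0 :=
  Iff.rfl

/-- The generator `E i j - E j i` of the rotations in the plane of the coordinates `i` and `j`. -/
def planeGenerator (R : Type*) [CommRing R] [DecidableEq ι] (i j : ι) : Matrix ι ι R :=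
  single i j 1 - single j i 1

theorem planeGenerator_mem_blockSO [DecidableEq ι] {S : Finset ι} {i j : ι} (hi : i ∈ S)
    (hj : j ∈ S) : planeGenerator R i j ∈ blockSO R S := by
  refine mem_blockSO.2 ⟨by simp [planeGenerator], fun a b hab => ?_⟩
  have hij : ¬(i = a ∧ j = b) := by rintro ⟨rfl, rfl⟩; tauto
  have hji : ¬(j = a ∧ i = b) := by rintro ⟨rfl, rfl⟩; tauto
  rw [planeGenerator, Matrix.sub_apply, single_apply_of_ne _ _ _ _ _ hij,
    single_apply_of_ne _ _ _ _ _ hji, sub_zero]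

theorem eq_zero_of_skew_of_blocks {S : Finset ι} {A : Matrix ι ι R} (hA : Aᵀ = -A)
    (hdiag : ∀ i j, (i ∈ S ↔ j ∈ S) → A i j = 0) (hoff : ∀ i ∈ S, ∀ j ∉ S, A i j = 0) :
    A = 0 := by
  ext i j
  by_cases hij : i ∈ S ↔ j ∈ S
  · exact hdiag i j hij
  by_cases hi : i ∈ S
  · exact hoff i hi j (by tauto)
  · have hji : A i j = -A j i := congrFun₂ hA j i
    rw [hji, hoff j (by tauto) i hi, neg_zero, Matrix.zero_apply]

variable [Fintype ι]

theorem commutator_planeGenerator_apply [DecidableEq ι] (A : Matrix ι ι R) {i j k : ι}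
    (hij : i ≠ j) (hki : k ≠ i) (hkj : k ≠ j) :
    (A * planeGenerator R i j - planeGenerator R i j * A) i k = -A j k := by
  simp [planeGenerator, mul_sub, sub_mul, hij, hki, hkj]

theorem commutator_apply_eq_zero_of_mem_span {κ : Type*} {A B : Matrix ι ι R}
    {J : κ → Matrix ι ι R} {i k : ι} (hJ : ∀ α, (A * J α - J α * A) i k = 0)
    (hB : B ∈ Submodule.span R (Set.range J)) : (A * B - B * A) i k = 0 := by
  induction hB using Submodule.span_induction with
  | mem B hB =>
    obtain ⟨α, rfl⟩ := hB
    exact hJ α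
  | zero => simp
  | add B C _ _ hB hC =>
    rw [mul_add, add_mul, add_sub_add_comm, Matrix.add_apply, hB, hC, add_zero]
  | smul r B _ hB =>
    rw [mul_smul_comm, smul_mul_assoc, ← smul_sub, Matrix.smul_apply, hB, smul_zero]

theorem apply_eq_zero_of_commutator_blockSO {S : Finset ι} (hS : S.Nontrivial) {A : Matrix ι ι R}
    (hA : ∀ B ∈ blockSO R S, ∀ i ∈ S, ∀ k ∉ S, (A * B - B * A) i k = 0) :
    ∀ j ∈ S, ∀ k ∉ S, A j k = 0 := by
  classical
  intro j hj k hk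
  obtain ⟨i, hi, hij⟩ := hS.exists_ne j
  have hcomm := hA _ (planeGenerator_mem_blockSO hi hj) i hi k hk
  rwa [commutator_planeGenerator_apply A hij (ne_of_mem_of_not_mem hi hk).symm
    (ne_of_mem_of_not_mem hj hk).symm, neg_eq_zero] at hcomm

theorem transpose_commutator_of_skew {A B : Matrix ι ι R} (hA : Aᵀ = -A) (hB : Bᵀ = -B) :
    (A * B - B * A)ᵀ = -(A * B - B * A) := by
  rw [transpose_sub, transpose_mul, transpose_mul, hA, hB, neg_mul_neg, neg_mul_neg, neg_sub]

theorem dotProduct_mulVec_self_eq_zero_of_skew [IsAddTorsionFree R] {M : Matrix ι ι R}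
    (hM : Mᵀ = -M) (x : ι → R) : x ⬝ᵥ M *ᵥ x = 0 := by
  rw [← self_eq_neg, ← dotProduct_neg, ← neg_mulVec, ← hM, dotProduct_transpose_mulVec]

end Algebra

section Cylinder

variable {ι : Type*} {S : Finset ι} {x x₀ : ι → ℝ}

/-- The cylinder in `ℝ^ι` over the unit sphere in the coordinates `S`, with the coordinates outside
`S` free. -/
def cylinderOver (S : Finset ι) : Set (ι → ℝ) :=
  {x | ∑ i ∈ S, x i ^ 2 = 1}

theorem mem_cylinderOver : x ∈ cylinderOver S ↔ ∑ i ∈ S, x i ^ 2 = 1 :=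
  Iff.rfl

theorem add_smul_single_mem_cylinderOver [DecidableEq ι] {k : ι} (hk : k ∉ S)
    (hx : x ∈ cylinderOver S) (t : ℝ) : x + t • Pi.single k 1 ∈ cylinderOver S := by
  rw [mem_cylinderOver, ← mem_cylinderOver.1 hx]
  refine Finset.sum_congr rfl fun i hi => ?_
  simp [ne_of_mem_of_not_mem hi hk]

theorem inv_sqrt_smul_mem_cylinderOver (hx : 0 < ∑ i ∈ S, x i ^ 2) :
    (√(∑ i ∈ S, x i ^ 2))⁻¹ • x ∈ cylinderOver S := by
  simp only [mem_cylinderOver, Pi.smul_apply, smul_eq_mul, mul_pow, inv_pow, Real.sq_sqrt hx.le,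
    ← Finset.mul_sum, inv_mul_cancel₀ hx.ne']

theorem eventually_sum_sq_pos_of_mem_cylinderOver (hx₀ : x₀ ∈ cylinderOver S) :
    ∀ᶠ x in 𝓝 x₀, 0 < ∑ i ∈ S, x i ^ 2 := by
  have hcont : Continuous fun x : ι → ℝ => ∑ i ∈ S, x i ^ 2 := by fun_prop
  exact hcont.continuousAt.eventually_const_lt (one_pos.trans_eq (mem_cylinderOver.1 hx₀).symm)

theorem tendsto_inv_sqrt_smul_nhdsWithin_cylinderOver (hx₀ : x₀ ∈ cylinderOver S) :
    Tendsto (fun x => (√(∑ i ∈ S, x i ^ 2))⁻¹ • x) (𝓝 x₀) (𝓝[cylinderOver S] x₀) := by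
  have hsqrt : √(∑ i ∈ S, x₀ i ^ 2) = 1 := by rw [mem_cylinderOver.1 hx₀, Real.sqrt_one]
  have hcont : Continuous fun x : ι → ℝ => √(∑ i ∈ S, x i ^ 2) := by fun_prop
  refine tendsto_nhdsWithin_iff.2 ⟨?_, ?_⟩
  · have hscale : ContinuousAt (fun x : ι → ℝ => (√(∑ i ∈ S, x i ^ 2))⁻¹ • x) x₀ :=
      (hcont.continuousAt.inv₀ (hsqrt.trans_ne one_ne_zero)).smul continuousAt_id
    simpa only [ContinuousAt, hsqrt, inv_one, one_smul] using hscale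
  · exact (eventually_sum_sq_pos_of_mem_cylinderOver hx₀).mono fun x hx =>
      inv_sqrt_smul_mem_cylinderOver hx

theorem linearMap_eq_zero_of_eventually_cylinderOver {F : Type*} [AddCommGroup F] [Module ℝ F]
    (hx₀ : x₀ ∈ cylinderOver S) {f : (ι → ℝ) →ₗ[ℝ] F}
    (hf : ∀ᶠ x in 𝓝[cylinderOver S] x₀, f x = 0) : f = 0 := by
  have hker : ∀ᶠ x in 𝓝 x₀, x ∈ LinearMap.ker f := by
    filter_upwards [(tendsto_inv_sqrt_smul_nhdsWithin_cylinderOver hx₀).eventually hf,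
      eventually_sum_sq_pos_of_mem_cylinderOver hx₀] with x hfx hx
    rw [map_smul] at hfx
    exact (smul_eq_zero_iff_right (inv_ne_zero (Real.sqrt_pos.2 hx).ne')).1 hfx
  exact LinearMap.ker_eq_top.1 <| Submodule.eq_top_of_nonempty_interior' _
    ⟨x₀, mem_interior_iff_mem_nhds.2 hker⟩

theorem eq_zero_of_eventually_sum_mul_eq_zero (hx₀ : x₀ ∈ cylinderOver S) {w : ι → ℝ}
    (hw : ∀ᶠ x in 𝓝[cylinderOver S] x₀, ∑ i ∈ S, w i * x i = 0) : ∀ i ∈ S, w i = 0 := by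
  classical
  intro i hi
  have hform : ∑ j ∈ S, w j • (LinearMap.proj j : (ι → ℝ) →ₗ[ℝ] ℝ) = 0 :=
    linearMap_eq_zero_of_eventually_cylinderOver hx₀ (by simpa using hw)
  simpa [Pi.single_apply, hi] using LinearMap.congr_fun hform (Pi.single i 1)

end Cylinder

section TangentField

variable {ι : Type*} [Fintype ι] {S : Finset ι} {M : Matrix ι ι ℝ} {b x₀ : ι → ℝ}

/-- The inner product `⟨M x + b, ν(x)⟩` of an affine vector field with the normal of
`cylinderOver S`, where `ν(x)` is `x` with the coordinates outside `S` replaced by `0`. -/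
def cylinderNormalPart (S : Finset ι) (M : Matrix ι ι ℝ) (b x : ι → ℝ) : ℝ :=
  ∑ i ∈ S, ((M *ᵥ x) i + b i) * x i

theorem cylinderNormalPart_add_smul_single [DecidableEq ι] {k : ι} (hk : k ∉ S) (x : ι → ℝ)
    (t : ℝ) :
    cylinderNormalPart S M b (x + t • Pi.single k 1) =
      cylinderNormalPart S M b x + t * ∑ i ∈ S, M i k * x i := by
  simp only [cylinderNormalPart, Finset.mul_sum, ← Finset.sum_add_distrib]
  refine Finset.sum_congr rfl fun i hi => ?_
  have hik : i ≠ k := ne_of_mem_of_not_mem hi hk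
  simp only [mulVec_add, mulVec_smul, mulVec_single_one, Pi.add_apply, Pi.smul_apply, col_apply,
    Pi.single_eq_of_ne hik, smul_eq_mul]
  ring

theorem cylinderNormalPart_eq_sum_of_skew (hM : Mᵀ = -M)
    (hoff : ∀ i ∈ S, ∀ k ∉ S, M i k = 0) (x : ι → ℝ) :
    cylinderNormalPart S M b x = ∑ i ∈ S, b i * x i := by
  classical
  set y : ι → ℝ := S.piecewise x 0 with hy
  have hMy : ∀ i ∈ S, (M *ᵥ x) i = (M *ᵥ y) i := fun i hi =>
    Finset.sum_congr rfl fun k _ => by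
      by_cases hk : k ∈ S
      · simp [hy, hk]
      · simp [hoff i hi k hk]
  have hquad : ∑ i ∈ S, (M *ᵥ x) i * x i = 0 := calc
    ∑ i ∈ S, (M *ᵥ x) i * x i = ∑ i ∈ S, y i * (M *ᵥ y) i :=
      Finset.sum_congr rfl fun i hi => by simp [hMy i hi, hy, hi, mul_comm]
    _ = y ⬝ᵥ M *ᵥ y :=
      Finset.sum_subset S.subset_univ fun i _ hi => by simp [hy, hi]
    _ = 0 := dotProduct_mulVec_self_eq_zero_of_skew hM y
  simp only [cylinderNormalPart, add_mul, Finset.sum_add_distrib, hquad, zero_add]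

theorem sum_apply_mul_eq_zero_of_eventually_cylinderNormalPart {x : ι → ℝ} {k : ι} (hk : k ∉ S)
    (hx : x ∈ cylinderOver S)
    (htan : ∀ᶠ y in 𝓝[cylinderOver S] x, cylinderNormalPart S M b y = 0) :
    ∑ i ∈ S, M i k * x i = 0 := by
  classical
  have hline : Tendsto (fun t : ℝ => x + t • Pi.single k (1 : ℝ)) (𝓝 0) (𝓝[cylinderOver S] x) :=
    tendsto_nhdsWithin_iff.2 ⟨Continuous.tendsto' (by fun_prop) _ _ (by simp),
      Eventually.of_forall (add_smul_single_mem_cylinderOver hk hx)⟩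
  obtain ⟨t, ht, ht₀⟩ := (((hline.eventually htan).filter_mono nhdsWithin_le_nhds).and
    (self_mem_nhdsWithin : {0}ᶜ ∈ 𝓝[≠] (0 : ℝ))).exists
  rw [cylinderNormalPart_add_smul_single hk, htan.self_of_nhdsWithin hx, zero_add] at ht
  exact (mul_eq_zero.1 ht).resolve_left ht₀

theorem apply_eq_zero_of_eventually_cylinderNormalPart (hx₀ : x₀ ∈ cylinderOver S)
    (htan : ∀ᶠ x in 𝓝[cylinderOver S] x₀, cylinderNormalPart S M b x = 0) :
    ∀ i ∈ S, ∀ k ∉ S, M i k = 0 := by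
  intro i hi k hk
  refine eq_zero_of_eventually_sum_mul_eq_zero hx₀ (w := fun i => M i k) ?_ i hi
  filter_upwards [eventually_eventually_nhdsWithin.2 htan, self_mem_nhdsWithin] with x hxtan hx
  exact sum_apply_mul_eq_zero_of_eventually_cylinderNormalPart hk hx hxtan

theorem translation_eq_zero_of_eventually_cylinderNormalPart (hM : Mᵀ = -M)
    (hx₀ : x₀ ∈ cylinderOver S)
    (htan : ∀ᶠ x in 𝓝[cylinderOver S] x₀, cylinderNormalPart S M b x = 0) :
    ∀ i ∈ S, b i = 0 :=
  have hoff := apply_eq_zero_of_eventually_cylinderNormalPart hx₀ htan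
  eq_zero_of_eventually_sum_mul_eq_zero hx₀ <|
    htan.mono fun x hx => (cylinderNormalPart_eq_sum_of_skew hM hoff x).symm.trans hx

theorem cylinder_bracket_vector_fields_vanish_general {κ : Type*} (hS : S.Nontrivial)
    {A : Matrix ι ι ℝ} (hA : Aᵀ = -A) {J : κ → Matrix ι ι ℝ} (hJ : ∀ α, (J α)ᵀ = -J α)
    (hspan : blockSO ℝ S ≤ Submodule.span ℝ (Set.range J)) {c : κ → ι → ℝ}
    (hx₀ : x₀ ∈ cylinderOver S)
    (htan : ∀ α, ∀ᶠ x in 𝓝[cylinderOver S] x₀,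
      cylinderNormalPart S (A * J α - J α * A) (c α) x = 0) :
    (∀ i ∈ S, ∀ k ∉ S, A i k = 0) ∧ ∀ α, ∀ i ∈ S, c α i = 0 := by
  refine ⟨apply_eq_zero_of_commutator_blockSO hS fun B hB i hi k hk => ?_, fun α => ?_⟩
  · exact commutator_apply_eq_zero_of_mem_span (fun α =>
      apply_eq_zero_of_eventually_cylinderNormalPart hx₀ (htan α) i hi k hk) (hspan hB)
  · exact translation_eq_zero_of_eventually_cylinderNormalPart
      (transpose_commutator_of_skew hA (hJ α)) hx₀ (htan α)

end TangentField

section FinCoordinates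

/-- The coordinates `x₁, …, x_{n-1}` of `ℝ^{n+1}` that enter the equation of `cylinderSet n`; with
indices counted from `0` these are the `i < n - 1`. -/
def sphereCoords (n : ℕ) : Finset (Fin (n + 1)) :=
  Finset.univ.filter fun i => (i : ℕ) < n - 1

variable {n : ℕ}

theorem mem_sphereCoords {i : Fin (n + 1)} : i ∈ sphereCoords n ↔ (i : ℕ) < n - 1 := by
  simp [sphereCoords]

theorem notMem_sphereCoords {i : Fin (n + 1)} : i ∉ sphereCoords n ↔ n - 1 ≤ (i : ℕ) := by
  rw [mem_sphereCoords, not_lt]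

theorem sphereCoords_nontrivial (hn : 3 ≤ n) : (sphereCoords n).Nontrivial :=
  ⟨⟨0, by omega⟩, mem_sphereCoords.2 (by simp only; omega),
    ⟨1, by omega⟩, mem_sphereCoords.2 (by simp only; omega), by simp⟩

theorem memSOnm1_iff_mem_blockSO {B : Matrix (Fin (n + 1)) (Fin (n + 1)) ℝ} :
    memSOnm1 n B ↔ B ∈ blockSO ℝ (sphereCoords n) := by
  simp only [memSOnm1, mem_blockSO, notMem_sphereCoords]

end FinCoordinates

/-- Let `n ≥ 3`, `{J_α}` an orthonormal basis of `so(n−1)`, `A` skew-symmetric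
and orthogonal to `so(n−1) ⊕ so(2)` (equivalently, `A_{ij} = 0` whenever both `i, j ≤ n−1`
and whenever both `i, j ∈ {n, n+1}`), and `c_α ∈ ℝ^{n+1}` with vanishing last two
coordinates.  If `⟨[A, J_α]x + c_α, ν(x)⟩ = 0` for every `x` in some nonempty relatively
open subset `U` of the cylinder (with `ν(x) = (x₁,…,x_{n−1},0,0)`), then `A = 0` and all
`c_α = 0`. -/
theorem cylinder_bracket_vector_fields_vanish
    (n : ℕ) (hn : 3 ≤ n)
    (J : Fin ((n - 1) * (n - 2) / 2) → Matrix (Fin (n + 1)) (Fin (n + 1)) ℝ)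
    (hJmem : ∀ α, memSOnm1 n (J α))
    (hJorth : ∀ α β, Matrix.trace (J α * (J β)ᵀ) = if α = β then 1 else 0)
    (hJspan : ∀ B, memSOnm1 n B →
      ∃ c : Fin ((n - 1) * (n - 2) / 2) → ℝ, B = ∑ α, c α • J α)
    (A : Matrix (Fin (n + 1)) (Fin (n + 1)) ℝ)
    (hAskew : Aᵀ = -A)
    (hAperp : ∀ i j : Fin (n + 1),
      (((i : ℕ) < n - 1 ∧ (j : ℕ) < n - 1) ∨ (n - 1 ≤ (i : ℕ) ∧ n - 1 ≤ (j : ℕ))) →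
      A i j = 0)
    (c : Fin ((n - 1) * (n - 2) / 2) → Fin (n + 1) → ℝ)
    (hc : ∀ α, ∀ i : Fin (n + 1), n - 1 ≤ (i : ℕ) → c α i = 0)
    (U : Set (Fin (n + 1) → ℝ))
    (hUsub : U ⊆ cylinderSet n)
    (hUrelOpen : ∃ V : Set (Fin (n + 1) → ℝ), IsOpen V ∧ U = V ∩ cylinderSet n)
    (hUne : U.Nonempty)
    (hnormal : ∀ x ∈ U, ∀ α,
      ∑ i ∈ Finset.univ.filter (fun i : Fin (n + 1) => (i : ℕ) < n - 1),
        ((A * J α - J α * A).mulVec x i + c α i) * x i = 0) :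
    A = 0 ∧ ∀ α, c α = 0 := by
  obtain ⟨V, hV, rfl⟩ := hUrelOpen
  obtain ⟨x₀, hx₀V, hx₀⟩ := hUne
  have hspan : blockSO ℝ (sphereCoords n) ≤ Submodule.span ℝ (Set.range J) := fun B hB =>
    Submodule.mem_span_range_iff_exists_fun ℝ |>.2 <|
      (hJspan B (memSOnm1_iff_mem_blockSO.2 hB)).imp fun _ h => h.symm
  obtain ⟨hAoff, hcS⟩ := cylinder_bracket_vector_fields_vanish_general
    (sphereCoords_nontrivial hn) hAskew (fun α => (hJmem α).1) hspan hx₀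
    fun α => mem_nhdsWithin.2 ⟨V, hV, hx₀V, fun x hx => hnormal x hx α⟩
  refine ⟨eq_zero_of_skew_of_blocks hAskew (fun i j hij => hAperp i j ?_) hAoff, fun α => ?_⟩
  · simp only [mem_sphereCoords] at hij
    omega
  · exact funext fun i => (em (i ∈ sphereCoords n)).elim (hcS α i) fun hi =>
      hc α i (notMem_sphereCoords.1 hi)
end

section
/- Under the stated hypotheses on the Bowl soliton profile φ, one has φ'(r) ≥ r/n for every r ≥ 0. -/
/-!
The slope `u = φ'` solves the first order equation `u' / (1 + u²) + (n - 1) u / r = 1`, and the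
line `r / n` is a barrier for it: wherever `u < r / n`, the equation gives
`u' ≥ u' / (1 + u²) = 1 - (n - 1) u / r ≥ 1 / n`, so `u - r / n` is nondecreasing wherever it is
negative. As it vanishes at `r = 0`, it never becomes negative.
-/

open Set

theorem image_le_of_deriv_right_le_deriv_of_lt {f f' g g' : ℝ → ℝ} {a b : ℝ}
    (hf : ContinuousOn f (Icc a b)) (hf' : ∀ x ∈ Ico a b, HasDerivWithinAt f (f' x) (Ici x) x)
    (hg : ContinuousOn g (Icc a b)) (hg' : ∀ x ∈ Ico a b, HasDerivWithinAt g (g' x) (Ici x) x)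
    (ha : f a ≤ g a) (bound : ∀ x ∈ Ico a b, g x < f x → f' x ≤ g' x) :
    ∀ x ∈ Icc a b, f x ≤ g x := by
  intro x hx
  -- Tilting `g` upwards makes the derivative inequality strict at every contact point.
  have le_tilt (ε : ℝ) (hε : 0 < ε) : f x ≤ g x + ε * (1 + (x - a)) := by
    refine image_le_of_deriv_right_lt_deriv_boundary'
      (B := fun t ↦ g t + ε * (1 + (t - a))) (B' := fun t ↦ g' t + ε)
      hf hf' ?_ (by fun_prop) ?_ ?_ hx
    · simpa using ha.trans (le_add_of_nonneg_right hε.le)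
    · intro t ht
      have tilt : HasDerivAt (fun t ↦ ε * (1 + (t - a))) ε t := by
        simpa using (((hasDerivAt_id t).sub_const a).const_add 1).const_mul ε
      exact (hg' t ht).add tilt.hasDerivWithinAt
    · intro t ht contact
      have tilt_pos : 0 < ε * (1 + (t - a)) := mul_pos hε (by linarith [ht.1])
      linarith [bound t ht (by linarith)]
  have factor_pos : 0 < 1 + (x - a) := by linarith [hx.1]
  refine le_of_forall_pos_le_add fun δ hδ ↦ ?_
  simpa [div_mul_cancel₀ δ factor_pos.ne'] using le_tilt _ (div_pos hδ factor_pos)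

theorem one_div_le_of_bowl_supersolution_of_lt {d r u u' : ℝ} (hd : 1 ≤ d) (hr : 0 < r)
    (hode : 1 ≤ u' / (1 + u ^ 2) + (d - 1) * u / r) (hu : u < r / d) : 1 / d ≤ u' := by
  have hd_pos : 0 < d := one_pos.trans_le hd
  have radial_term_le : (d - 1) * u / r ≤ 1 - 1 / d :=
    calc (d - 1) * u / r ≤ (d - 1) * (r / d) / r := by gcongr
      _ = 1 - 1 / d := by field_simp
  have le_quotient : 1 / d ≤ u' / (1 + u ^ 2) := by linarith
  calc 1 / d ≤ 1 / d * (1 + u ^ 2) :=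
        le_mul_of_one_le_right (one_div_pos.2 hd_pos).le (le_add_of_nonneg_right (sq_nonneg u))
    _ ≤ u' := (le_div_iff₀ (by positivity)).1 le_quotient

theorem bowl_profile_deriv_lower_bound_general {d : ℝ} (hd : 1 ≤ d) {φ : ℝ → ℝ}
    (hC2 : ContDiffOn ℝ 2 φ (Ici 0)) (h0' : 0 ≤ derivWithin φ (Ici 0) 0)
    (hODE : ∀ r > 0, 1 ≤ derivWithin (derivWithin φ (Ici 0)) (Ici 0) r
        / (1 + derivWithin φ (Ici 0) r ^ 2) + (d - 1) * derivWithin φ (Ici 0) r / r) :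
    ∀ r ≥ 0, r / d ≤ derivWithin φ (Ici 0) r := by
  intro r hr
  set u := derivWithin φ (Ici 0)
  have u_contDiffOn : ContDiffOn ℝ 1 u (Ici 0) :=
    hC2.derivWithin (uniqueDiffOn_Ici 0) (by norm_num)
  have u_hasDeriv (x : ℝ) (hx : 0 ≤ x) :
      HasDerivWithinAt u (derivWithin u (Ici 0) x) (Ici x) x :=
    (u_contDiffOn.differentiableOn one_ne_zero x hx).hasDerivWithinAt.mono (Ici_subset_Ici.2 hx)
  refine image_le_of_deriv_right_le_deriv_of_lt (f := fun x ↦ x / d) (f' := fun _ ↦ 1 / d)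
    (by fun_prop) (fun x _ ↦ ((hasDerivAt_id x).div_const d).hasDerivWithinAt)
    (u_contDiffOn.continuousOn.mono Icc_subset_Ici_self) (fun x hx ↦ u_hasDeriv x hx.1)
    (by simpa using h0') ?_ r ⟨hr, le_rfl⟩
  intro x hx below
  obtain rfl | x_pos := hx.1.eq_or_lt
  · exact absurd below (by simpa using h0')
  · exact one_div_le_of_bowl_supersolution_of_lt hd x_pos (hODE x x_pos) below

/-- For the Bowl soliton profile `φ` (C² on `[0,∞)`, with `φ(0) = φ'(0) = 0`,
`φ'' ≥ 0`, satisfying `φ''/(1+φ'²) + (n−1)φ'/r = 1` for `r > 0`), one has `φ'(r) ≥ r/n`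
for every `r ≥ 0`. Derivatives on `[0,∞)` are taken as `derivWithin _ (Set.Ici 0)`. -/
theorem bowl_profile_deriv_lower_bound
    (n : ℕ) (hn : 2 ≤ n) (φ : ℝ → ℝ)
    (hC2 : ContDiffOn ℝ 2 φ (Set.Ici 0))
    (h0 : φ 0 = 0)
    (h0' : derivWithin φ (Set.Ici 0) 0 = 0)
    (hconvex : ∀ r ≥ (0:ℝ), 0 ≤ derivWithin (derivWithin φ (Set.Ici 0)) (Set.Ici 0) r)
    (hODE : ∀ r > (0:ℝ),
      derivWithin (derivWithin φ (Set.Ici 0)) (Set.Ici 0) r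
          / (1 + (derivWithin φ (Set.Ici 0) r) ^ 2)
        + (n - 1 : ℝ) * derivWithin φ (Set.Ici 0) r / r = 1) :
    ∀ r ≥ (0:ℝ), derivWithin φ (Set.Ici 0) r ≥ r / n := by
  exact bowl_profile_deriv_lower_bound_general (by exact_mod_cast one_le_two.trans hn) hC2 h0'.ge
    fun r hr ↦ (hODE r hr).ge
end

section
/- Under the stated hypotheses on the Bowl soliton profile φ, one has φ(r) ≥ r²/(2n) for every r ≥ 0. -/
/-!
Where `φ'(r) < r / n`, the term `(n - 1) φ'(r) / r` is at most `(n - 1) / n`, so the equation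
leaves `φ''(r) ≥ (1 + φ'(r)²) / n ≥ 1 / n`. Thus `φ'` grows at least as fast as the barrier `r / n`
whenever it lies below it, and since both start at `0`, it never does: `φ'(r) ≥ r / n`. Integrating
gives `φ(r) ≥ r² / (2n)`.
-/

open Set

theorem le_of_deriv_le_deriv_of_lt {f g f' g' : ℝ → ℝ} {a b : ℝ}
    (hf : ContinuousOn f (Icc a b)) (hg : ContinuousOn g (Icc a b))
    (hf' : ∀ x ∈ Ioo a b, HasDerivAt f (f' x) x) (hg' : ∀ x ∈ Ioo a b, HasDerivAt g (g' x) x)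
    (hle : ∀ x ∈ Ioo a b, g x < f x → f' x ≤ g' x) (ha : f a ≤ g a) :
    ∀ x ∈ Icc a b, f x ≤ g x := by
  intro x hx
  by_contra! hlt
  have hsub : Icc a x ⊆ Icc a b := Icc_subset_Icc_right hx.2
  have hcompact : IsCompact {y ∈ Icc a x | f y ≤ g y} :=
    isCompact_Icc.of_isClosed_subset
      (isClosed_Icc.isClosed_le (hf.mono hsub) (hg.mono hsub)) (sep_subset _ _)
  obtain ⟨c, ⟨hc, hfgc⟩, hlast⟩ := hcompact.exists_isGreatest ⟨a, left_mem_Icc.2 hx.1, ha⟩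
  have hcb : Icc c x ⊆ Icc a b := Icc_subset_Icc hc.1 hx.2
  have hopen : ∀ y ∈ interior (Icc c x), y ∈ Ioo a b ∧ g y < f y := by
    intro y hy
    rw [interior_Icc] at hy
    refine ⟨⟨hc.1.trans_lt hy.1, hy.2.trans_le hx.2⟩, ?_⟩
    by_contra! hfgy
    exact hy.1.not_ge (hlast ⟨⟨hc.1.trans hy.1.le, hy.2.le⟩, hfgy⟩)
  have hmono : MonotoneOn (g - f) (Icc c x) :=
    monotoneOn_of_hasDerivWithinAt_nonneg (convex_Icc c x) ((hg.mono hcb).sub (hf.mono hcb))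
      (fun y hy => ((hg' y (hopen y hy).1).sub (hf' y (hopen y hy).1)).hasDerivWithinAt)
      (fun y hy => sub_nonneg.2 (hle y (hopen y hy).1 (hopen y hy).2))
  have hgap : g c - f c ≤ g x - f x := hmono (left_mem_Icc.2 hc.2) (right_mem_Icc.2 hc.2) hc.2
  linarith

theorem hasDerivAt_derivWithin_Ici_s7 {f : ℝ → ℝ} {a x : ℝ} (hf : DifferentiableOn ℝ f (Ici a))
    (hx : a < x) : HasDerivAt f (derivWithin f (Ici a) x) x :=
  (hf x hx.le).hasDerivWithinAt.hasDerivAt (Ici_mem_nhds hx)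

section BowlSupersolution

variable {d R : ℝ} {φ φ' φ'' : ℝ → ℝ}

theorem inv_le_of_bowl_ineq_of_lt_div {r p q : ℝ} (hd : 1 ≤ d) (hr : 0 < r)
    (hineq : 1 ≤ q / (1 + p ^ 2) + (d - 1) * p / r) (hp : p < r / d) : d⁻¹ ≤ q := by
  have hd0 : 0 < d := by linarith
  have hrotational : (d - 1) * p / r ≤ 1 - d⁻¹ := by
    calc (d - 1) * p / r ≤ (d - 1) * (r / d) / r := by gcongr
      _ = 1 - d⁻¹ := by field_simp
  have hradial : d⁻¹ ≤ q / (1 + p ^ 2) := by linarith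
  calc d⁻¹ ≤ d⁻¹ * (1 + p ^ 2) := le_mul_of_one_le_right (inv_nonneg.2 hd0.le) (by nlinarith)
    _ ≤ q := (le_div_iff₀ (by positivity)).1 hradial

theorem div_le_deriv_of_bowl_ineq (hd : 1 ≤ d) (hcont : ContinuousOn φ' (Icc 0 R))
    (hderiv : ∀ r ∈ Ioo 0 R, HasDerivAt φ' (φ'' r) r) (h0 : 0 ≤ φ' 0)
    (hineq : ∀ r ∈ Ioo 0 R, 1 ≤ φ'' r / (1 + φ' r ^ 2) + (d - 1) * φ' r / r) :
    ∀ r ∈ Icc 0 R, r / d ≤ φ' r :=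
  le_of_deriv_le_deriv_of_lt (f' := fun _ => d⁻¹) (by fun_prop) hcont
    (fun r _ => by simpa using (hasDerivAt_id r).div_const d) hderiv
    (fun r hr hlt => inv_le_of_bowl_ineq_of_lt_div hd hr.1 (hineq r hr) hlt) (by simpa using h0)

theorem bowl_profile_lower_bound_general (hd : 1 ≤ d)
    (hφ : ContinuousOn φ (Icc 0 R)) (hφ' : ContinuousOn φ' (Icc 0 R))
    (hderiv : ∀ r ∈ Ioo 0 R, HasDerivAt φ (φ' r) r)
    (hderiv' : ∀ r ∈ Ioo 0 R, HasDerivAt φ' (φ'' r) r)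
    (h0 : 0 ≤ φ 0) (h0' : 0 ≤ φ' 0)
    (hineq : ∀ r ∈ Ioo 0 R, 1 ≤ φ'' r / (1 + φ' r ^ 2) + (d - 1) * φ' r / r) :
    ∀ r ∈ Icc 0 R, r ^ 2 / (2 * d) ≤ φ r := by
  have hslope : ∀ r ∈ Icc 0 R, r / d ≤ φ' r :=
    div_le_deriv_of_bowl_ineq hd hφ' hderiv' h0' hineq
  have hparabola (r : ℝ) : HasDerivAt (fun s => s ^ 2 / (2 * d)) (r / d) r := by
    simpa [mul_div_mul_left] using (hasDerivAt_pow 2 r).div_const (2 * d)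
  exact le_of_deriv_le_deriv_of_lt (by fun_prop) hφ (fun r _ => hparabola r) hderiv
    (fun r hr _ => hslope r (Ioo_subset_Icc_self hr)) (by simpa using h0)

end BowlSupersolution

/-- For the Bowl soliton profile `φ` (C² on `[0,∞)`, with `φ(0) = φ'(0) = 0`,
`φ'' ≥ 0`, satisfying `φ''/(1+φ'²) + (n−1)φ'/r = 1` for `r > 0`), one has `φ(r) ≥ r²/(2n)`
for every `r ≥ 0`. Derivatives on `[0,∞)` are taken as `derivWithin _ (Set.Ici 0)`. -/
theorem bowl_profile_lower_bound
    (n : ℕ) (hn : 2 ≤ n) (φ : ℝ → ℝ)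
    (hC2 : ContDiffOn ℝ 2 φ (Set.Ici 0))
    (h0 : φ 0 = 0)
    (h0' : derivWithin φ (Set.Ici 0) 0 = 0)
    (hconvex : ∀ r ≥ (0:ℝ), 0 ≤ derivWithin (derivWithin φ (Set.Ici 0)) (Set.Ici 0) r)
    (hODE : ∀ r > (0:ℝ),
      derivWithin (derivWithin φ (Set.Ici 0)) (Set.Ici 0) r
          / (1 + (derivWithin φ (Set.Ici 0) r) ^ 2)
        + (n - 1 : ℝ) * derivWithin φ (Set.Ici 0) r / r = 1) :
    ∀ r ≥ (0:ℝ), φ r ≥ r ^ 2 / (2 * n) := by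
  intro r hr
  have hC1 : ContDiffOn ℝ 1 (derivWithin φ (Ici 0)) (Ici 0) :=
    hC2.derivWithin (uniqueDiffOn_Ici 0) (by norm_num)
  exact bowl_profile_lower_bound_general (by exact_mod_cast one_le_two.trans hn)
    (hC2.continuousOn.mono Icc_subset_Ici_self) (hC1.continuousOn.mono Icc_subset_Ici_self)
    (fun s hs => hasDerivAt_derivWithin_Ici_s7 (hC2.differentiableOn two_ne_zero) hs.1)
    (fun s hs => hasDerivAt_derivWithin_Ici_s7 (hC1.differentiableOn one_ne_zero) hs.1)
    h0.ge h0'.ge (fun s hs => (hODE s hs.1).ge) r (right_mem_Icc.2 hr)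
end

section
/- Under the stated hypotheses on the Bowl soliton profile φ, for every r > 0 one has 1/√(1 + φ'(r)²) < n/r. (That is, the mean curvature of the Bowl soliton at a point at distance r from its rotation axis is strictly less than n/r.) -/
/-!
Let `u = φ'`. Wherever `u r ≤ r / n`, the equation forces `u' / (1 + u²) ≥ 1 / n`, hence
`u' ≥ 1 / n`: the function `u - r / n` is nondecreasing wherever it is negative. Since it vanishes
at `0`, it never becomes negative, and `r / n ≤ u < √(1 + u²)` is the claim.
-/

open Set Topology

theorem hasDerivAt_derivWithin_of_mem_nhds {𝕜 F : Type*} [NontriviallyNormedField 𝕜]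
    [NormedAddCommGroup F] [NormedSpace 𝕜 F] {f : 𝕜 → F} {s : Set 𝕜} {x : 𝕜}
    (hf : ContDiffOn 𝕜 2 f s) (hs : UniqueDiffOn 𝕜 s) (hx : s ∈ 𝓝 x) :
    HasDerivAt (derivWithin f s) (derivWithin (derivWithin f s) s x) x := by
  have hC1 : ContDiffOn 𝕜 1 (derivWithin f s) s := hf.derivWithin hs one_add_one_eq_two.le
  exact (hC1.differentiableOn one_ne_zero x (mem_of_mem_nhds hx)).hasDerivWithinAt.hasDerivAt hx

theorem nonneg_of_hasDerivAt_nonneg_of_neg {g g' : ℝ → ℝ} {a b : ℝ} (hab : a ≤ b)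
    (hcont : ContinuousOn g (Icc a b)) (ha : 0 ≤ g a)
    (hderiv : ∀ x ∈ Ioo a b, HasDerivAt g (g' x) x)
    (hg' : ∀ x ∈ Ioo a b, g x < 0 → 0 ≤ g' x) : 0 ≤ g b := by
  have hcompact : IsCompact (Icc a b ∩ g ⁻¹' Ici 0) :=
    isCompact_Icc.of_isClosed_subset (hcont.preimage_isClosed_of_isClosed isClosed_Icc isClosed_Ici)
      inter_subset_left
  obtain ⟨c, ⟨⟨hac, hcb⟩, hc⟩, hlast⟩ :=
    hcompact.exists_isGreatest ⟨a, left_mem_Icc.2 hab, ha⟩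
  have hsub : Ioo c b ⊆ Ioo a b := Ioo_subset_Ioo_left hac
  have hneg : ∀ x ∈ Ioo c b, g x < 0 := fun x hx ↦
    not_le.1 fun hx0 ↦ hx.1.not_ge (hlast ⟨Ioo_subset_Icc_self (hsub hx), hx0⟩)
  have hmono : MonotoneOn g (Icc c b) := by
    refine monotoneOn_of_hasDerivWithinAt_nonneg (f' := g') (convex_Icc c b)
      (hcont.mono (Icc_subset_Icc_left hac)) ?_ ?_ <;> rw [interior_Icc]
    · exact fun x hx ↦ (hderiv x (hsub hx)).hasDerivWithinAt
    · exact fun x hx ↦ hg' x (hsub hx) (hneg x hx)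
  exact le_trans hc (hmono (left_mem_Icc.2 hcb) (right_mem_Icc.2 hcb) hcb)

theorem one_div_sqrt_one_add_sq_lt_one_div {a s : ℝ} (ha : 0 < a) (has : a ≤ s) :
    1 / √(1 + s ^ 2) < 1 / a :=
  one_div_lt_one_div_of_lt ha <| has.trans_lt <| Real.lt_sqrt_of_sq_lt <| lt_one_add (s ^ 2)

section TranslatorODE

variable {n : ℝ}

theorem one_div_le_of_translator_ode_of_le {r s s' : ℝ} (hn : 1 ≤ n) (hr : 0 < r)
    (hs : s ≤ r / n) (hode : s' / (1 + s ^ 2) + (n - 1) * s / r = 1) : 1 / n ≤ s' := by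
  have : 0 < n := by linarith
  have hcurv : 1 / n ≤ s' / (1 + s ^ 2) := calc
    1 / n = 1 - (n - 1) * (r / n) / r := by field_simp; ring
    _ ≤ 1 - (n - 1) * s / r := by
      have : 0 ≤ n - 1 := by linarith
      gcongr
    _ = s' / (1 + s ^ 2) := by linarith
  calc
    1 / n ≤ 1 / n * (1 + s ^ 2) :=
      le_mul_of_one_le_right (by positivity) (le_add_of_nonneg_right (sq_nonneg s))
    _ ≤ s' := (le_div_iff₀ (by positivity)).1 hcurv

variable {u u' : ℝ → ℝ} {r : ℝ}

theorem div_le_of_translator_ode (hn : 1 ≤ n) (hr : 0 ≤ r)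
    (hcont : ContinuousOn u (Icc 0 r)) (hu0 : 0 ≤ u 0)
    (hderiv : ∀ x ∈ Ioo 0 r, HasDerivAt u (u' x) x)
    (hode : ∀ x ∈ Ioo 0 r, u' x / (1 + u x ^ 2) + (n - 1) * u x / x = 1) :
    r / n ≤ u r := by
  refine sub_nonneg.1 <| nonneg_of_hasDerivAt_nonneg_of_neg (g := fun x ↦ u x - x / n)
    (g' := fun x ↦ u' x - 1 / n) hr (by fun_prop) (by simpa using hu0) ?_ ?_
  · exact fun x hx ↦ (hderiv x hx).sub ((hasDerivAt_id x).div_const n)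
  · exact fun x hx hneg ↦ sub_nonneg.2 <|
      one_div_le_of_translator_ode_of_le hn hx.1 (sub_neg.1 hneg).le (hode x hx)

theorem bowl_mean_curvature_upper_bound_general (hn : 1 ≤ n) (hr : 0 < r)
    (hcont : ContinuousOn u (Icc 0 r)) (hu0 : 0 ≤ u 0)
    (hderiv : ∀ x ∈ Ioo 0 r, HasDerivAt u (u' x) x)
    (hode : ∀ x ∈ Ioo 0 r, u' x / (1 + u x ^ 2) + (n - 1) * u x / x = 1) :
    1 / √(1 + u r ^ 2) < n / r := by
  have hslope : r / n ≤ u r := div_le_of_translator_ode hn hr.le hcont hu0 hderiv hode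
  simpa only [one_div_div] using
    one_div_sqrt_one_add_sq_lt_one_div (div_pos hr (by linarith)) hslope

end TranslatorODE

/-- For the Bowl soliton profile `φ` (C² on `[0,∞)`, with `φ(0) = φ'(0) = 0`,
`φ'' ≥ 0`, satisfying `φ''/(1+φ'²) + (n−1)φ'/r = 1` for `r > 0`), the mean curvature
`1/√(1+φ'(r)²)` is strictly less than `n/r` for every `r > 0`. -/
theorem bowl_mean_curvature_upper_bound
    (n : ℕ) (hn : 2 ≤ n) (φ : ℝ → ℝ)
    (hC2 : ContDiffOn ℝ 2 φ (Set.Ici 0))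
    (h0 : φ 0 = 0)
    (h0' : derivWithin φ (Set.Ici 0) 0 = 0)
    (hconvex : ∀ r ≥ (0:ℝ), 0 ≤ derivWithin (derivWithin φ (Set.Ici 0)) (Set.Ici 0) r)
    (hODE : ∀ r > (0:ℝ),
      derivWithin (derivWithin φ (Set.Ici 0)) (Set.Ici 0) r
          / (1 + (derivWithin φ (Set.Ici 0) r) ^ 2)
        + (n - 1 : ℝ) * derivWithin φ (Set.Ici 0) r / r = 1) :
    ∀ r > (0:ℝ), 1 / Real.sqrt (1 + (derivWithin φ (Set.Ici 0) r) ^ 2) < n / r := by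
  intro r hr
  have hIci : UniqueDiffOn ℝ (Ici (0 : ℝ)) := uniqueDiffOn_Ici 0
  exact bowl_mean_curvature_upper_bound_general (by exact_mod_cast one_le_two.trans hn) hr
    ((hC2.continuousOn_derivWithin hIci one_le_two).mono Icc_subset_Ici_self) h0'.ge
    (fun x hx ↦ hasDerivAt_derivWithin_of_mem_nhds hC2 hIci (Ici_mem_nhds hx.1))
    (fun x hx ↦ hODE x hx.1)
end

section
/- Under the stated hypotheses on the Bowl soliton profile φ, let J be a skew-symmetric real (n+1)×(n+1) matrix with Tr(J Jᵀ) = 1 whose entries vanish outside the top-left (n−1)×(n−1) block. Then for every x ∈ ℝⁿ, the point p = (x, φ(|x|)) ∈ ℝ^{n+1} satisfies |J p| · (1 + φ'(|x|)²)^{−1/2} < 2n. (That is, |J| H < 2n on the Bowl soliton, where H is its mean curvature.) -/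
open Matrix

/-!
Wherever the slope `u = φ'` of the profile lies below the line `r / n`, the soliton equation gives
`u' / (1 + u²) = 1 - (n - 1) u / r ≥ 1 / n`, so `u` grows at least as fast as the line there and,
starting from `u 0 = 0`, never drops below it. Hence `|x| ≤ n φ'(|x|) < n √(1 + φ'(|x|)²)`. On the
other side, `J` ignores the last coordinate and has Frobenius norm `1`, so `|J p| ≤ |x|`.
-/

section Profile

open Set

theorem image_le_of_deriv_right_le_of_lt {f f' g g' : ℝ → ℝ} {a b : ℝ}
    (hf : ContinuousOn f (Icc a b)) (hf' : ∀ t ∈ Ico a b, HasDerivWithinAt f (f' t) (Ici t) t)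
    (hg : ContinuousOn g (Icc a b)) (hg' : ∀ t ∈ Ico a b, HasDerivWithinAt g (g' t) (Ici t) t)
    (ha : f a ≤ g a) (bound : ∀ t ∈ Ico a b, g t < f t → f' t ≤ g' t) ⦃t : ℝ⦄
    (ht : t ∈ Icc a b) : f t ≤ g t := by
  -- Tilting `g` by `ε (1 + s - a)` makes the derivative inequality strict at contact points.
  have le_tilted (ε : ℝ) (hε : 0 < ε) : f t ≤ g t + ε * (1 + t - a) := by
    have tilt_deriv (s : ℝ) : HasDerivAt (fun s ↦ ε * (1 + s - a)) ε s := by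
      simpa using (((hasDerivAt_id s).const_add 1).sub_const a).const_mul ε
    refine image_le_of_deriv_right_lt_deriv_boundary' hf hf'
      (B := fun s ↦ g s + ε * (1 + s - a)) (B' := fun s ↦ g' s + ε) ?_ (by fun_prop)
      (fun s hs ↦ (hg' s hs).add (tilt_deriv s).hasDerivWithinAt) ?_ ht
    · linarith
    · intro s hs contact
      have tilt_pos : 0 < ε * (1 + s - a) := mul_pos hε (by linarith [hs.1])
      linarith [bound s hs (by linarith)]
  have hlength : 0 < 1 + t - a := by linarith [ht.1]
  refine le_of_forall_pos_le_add fun δ hδ ↦ ?_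
  simpa [hlength.ne'] using le_tilted (δ / (1 + t - a)) (by positivity)

theorem inv_le_of_soliton_eq_of_lt {k r u v : ℝ} (hk : 0 ≤ k) (hr : 0 < r)
    (hode : v / (1 + u ^ 2) + k * u / r = 1) (hu : u < r / (k + 1)) : (k + 1)⁻¹ ≤ v := by
  have hterm : k * u / r ≤ k / (k + 1) := by
    calc k * u / r ≤ k * (r / (k + 1)) / r := by gcongr
      _ = k / (k + 1) := by field_simp
  have hcurv : (k + 1)⁻¹ ≤ v / (1 + u ^ 2) := by
    have : (k + 1)⁻¹ + k / (k + 1) = 1 := by field_simp; ring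
    linarith
  calc (k + 1)⁻¹ ≤ (k + 1)⁻¹ * (1 + u ^ 2) :=
        le_mul_of_one_le_right (by positivity) (by linarith [sq_nonneg u])
    _ ≤ v := (le_div_iff₀ (by positivity)).1 hcurv

theorem div_le_of_soliton_ode {k b : ℝ} {u v : ℝ → ℝ} (hk : 0 ≤ k)
    (hu : ContinuousOn u (Icc 0 b)) (hv : ∀ r ∈ Ico 0 b, HasDerivWithinAt u (v r) (Ici r) r)
    (h0 : 0 ≤ u 0) (hode : ∀ r ∈ Ioo 0 b, v r / (1 + u r ^ 2) + k * u r / r = 1) ⦃r : ℝ⦄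
    (hr : r ∈ Icc 0 b) : r / (k + 1) ≤ u r := by
  refine image_le_of_deriv_right_le_of_lt (f := fun t ↦ t / (k + 1)) (f' := fun _ ↦ (k + 1)⁻¹)
    (by fun_prop) (fun t _ ↦ ?_) hu hv (by simpa using h0) (fun t ht hlt ↦ ?_) hr
  · simpa using ((hasDerivAt_id t).div_const (k + 1)).hasDerivWithinAt
  · rcases ht.1.eq_or_lt with rfl | hpos
    · exact absurd h0 (by simpa using hlt)
    · exact inv_le_of_soliton_eq_of_lt hk hpos (hode t ⟨hpos, ht.2⟩) hlt

theorem div_le_derivWithin_of_soliton_ode {k : ℝ} {φ : ℝ → ℝ} (hk : 0 ≤ k)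
    (hC2 : ContDiffOn ℝ 2 φ (Ici 0)) (h0 : 0 ≤ derivWithin φ (Ici 0) 0)
    (hode : ∀ r > 0, derivWithin (derivWithin φ (Ici 0)) (Ici 0) r
      / (1 + derivWithin φ (Ici 0) r ^ 2) + k * derivWithin φ (Ici 0) r / r = 1)
    {r : ℝ} (hr : 0 ≤ r) : r / (k + 1) ≤ derivWithin φ (Ici 0) r := by
  have hC1 : ContDiffOn ℝ 1 (derivWithin φ (Ici 0)) (Ici 0) :=
    hC2.derivWithin (uniqueDiffOn_Ici 0) (by norm_num)
  exact div_le_of_soliton_ode hk (hC1.continuousOn.mono Icc_subset_Ici_self)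
    (fun t ht ↦ (hC1.differentiableOn one_ne_zero t ht.1).hasDerivWithinAt.mono
      (Ici_subset_Ici.2 ht.1))
    h0 (fun t ht ↦ hode t ht.1) ⟨hr, le_rfl⟩

end Profile

section Frobenius

theorem mulVec_snoc_of_last_eq_zero {R m : Type*} [NonUnitalNonAssocSemiring R] {n : ℕ}
    {A : Matrix m (Fin (n + 1)) R} (hA : ∀ i, A i (Fin.last n) = 0) (x : Fin n → R) (c : R) :
    A *ᵥ Fin.snoc x c = A *ᵥ Fin.snoc x 0 := by
  ext i
  simp [mulVec, dotProduct, Fin.sum_univ_castSucc, hA]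

variable {R m : Type*} [CommSemiring R] [LinearOrder R] [IsStrictOrderedRing R]
  [ExistsAddOfLE R] [Fintype m]

theorem sum_sq_mulVec_le {n : Type*} [Fintype n] (A : Matrix m n R) (v : n → R) :
    ∑ i, (A *ᵥ v) i ^ 2 ≤ trace (A * Aᵀ) * ∑ j, v j ^ 2 :=
  calc ∑ i, (A *ᵥ v) i ^ 2 ≤ ∑ i, (∑ j, A i j ^ 2) * ∑ j, v j ^ 2 :=
        Finset.sum_le_sum fun i _ ↦ Finset.sum_mul_sq_le_sq_mul_sq _ (A i) v
    _ = trace (A * Aᵀ) * ∑ j, v j ^ 2 := by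
        simp [trace, mul_apply, sq, Finset.sum_mul]

theorem sum_sq_mulVec_snoc_le {n : ℕ} {A : Matrix m (Fin (n + 1)) R}
    (hA : ∀ i, A i (Fin.last n) = 0) (x : Fin n → R) (c : R) :
    ∑ i, (A *ᵥ Fin.snoc x c) i ^ 2 ≤ trace (A * Aᵀ) * ∑ j, x j ^ 2 := by
  rw [mulVec_snoc_of_last_eq_zero hA]
  simpa [Fin.sum_univ_castSucc] using sum_sq_mulVec_le A (Fin.snoc x 0)

end Frobenius

theorem bowl_rotation_field_bound_general {m : Type*} [Fintype m] (n : ℕ) (hn : 1 ≤ n)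
    (φ : ℝ → ℝ) (hC2 : ContDiffOn ℝ 2 φ (Set.Ici 0)) (h0 : derivWithin φ (Set.Ici 0) 0 = 0)
    (hODE : ∀ r > 0, derivWithin (derivWithin φ (Set.Ici 0)) (Set.Ici 0) r
      / (1 + derivWithin φ (Set.Ici 0) r ^ 2) + (n - 1) * derivWithin φ (Set.Ici 0) r / r = 1)
    (A : Matrix m (Fin (n + 1)) ℝ) (hnorm : trace (A * Aᵀ) ≤ 1)
    (hlast : ∀ i, A i (Fin.last n) = 0) (x : Fin n → ℝ) :
    √(∑ i, (A *ᵥ Fin.snoc x (φ √(∑ j, x j ^ 2))) i ^ 2)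
      * (√(1 + derivWithin φ (Set.Ici 0) √(∑ j, x j ^ 2) ^ 2))⁻¹ < n := by
  set r := √(∑ j, x j ^ 2)
  set u := derivWithin φ (Set.Ici 0) r
  have hn_one : (1 : ℝ) ≤ n := Nat.one_le_cast.2 hn
  have hn_pos : (0 : ℝ) < n := zero_lt_one.trans_le hn_one
  have hslope : r / n ≤ u := by
    simpa only [sub_add_cancel] using
      div_le_derivWithin_of_soliton_ode (sub_nonneg.2 hn_one) hC2 h0.ge hODE (Real.sqrt_nonneg _)
  have hfield : √(∑ i, (A *ᵥ Fin.snoc x (φ r)) i ^ 2) ≤ r :=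
    Real.sqrt_le_sqrt <| (sum_sq_mulVec_snoc_le hlast x (φ r)).trans <|
      mul_le_of_le_one_left (by positivity) hnorm
  rw [← div_eq_mul_inv, div_lt_iff₀ (by positivity)]
  calc √(∑ i, (A *ᵥ Fin.snoc x (φ r)) i ^ 2) ≤ r := hfield
    _ ≤ n * u := (div_le_iff₀' hn_pos).1 hslope
    _ < n * √(1 + u ^ 2) := by gcongr; exact Real.lt_sqrt_of_sq_lt (by linarith)

/-- Let `φ` be the Bowl soliton profile (C² on `[0,∞)`, `φ(0) = φ'(0) = 0`,
`φ'' ≥ 0`, `φ''/(1+φ'²) + (n−1)φ'/r = 1` for `r > 0`), and let `J` be a skew-symmetric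
real `(n+1)×(n+1)` matrix with `Tr(J Jᵀ) = 1` whose entries vanish outside the top-left
`(n−1)×(n−1)` block. Then for every `x ∈ ℝⁿ`, the point `p = (x, φ(|x|))` satisfies
`|J p| · (1 + φ'(|x|)²)^{−1/2} < 2n`, i.e. `|J| H < 2n` on the Bowl soliton. -/
theorem bowl_rotation_field_bound
    (n : ℕ) (hn : 2 ≤ n) (φ : ℝ → ℝ)
    (hC2 : ContDiffOn ℝ 2 φ (Set.Ici 0))
    (h0 : φ 0 = 0)
    (h0' : derivWithin φ (Set.Ici 0) 0 = 0)
    (hconvex : ∀ r ≥ (0:ℝ), 0 ≤ derivWithin (derivWithin φ (Set.Ici 0)) (Set.Ici 0) r)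
    (hODE : ∀ r > (0:ℝ),
      derivWithin (derivWithin φ (Set.Ici 0)) (Set.Ici 0) r
          / (1 + (derivWithin φ (Set.Ici 0) r) ^ 2)
        + (n - 1 : ℝ) * derivWithin φ (Set.Ici 0) r / r = 1)
    (J : Matrix (Fin (n+1)) (Fin (n+1)) ℝ)
    (hskew : Jᵀ = -J)
    (hnorm : Matrix.trace (J * Jᵀ) = 1)
    (hblock : ∀ i j : Fin (n+1), (n - 1 ≤ (i : ℕ) ∨ n - 1 ≤ (j : ℕ)) → J i j = 0)
    (x : Fin n → ℝ) :
    Real.sqrt (∑ i : Fin (n+1),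
        (J.mulVec (fun i : Fin (n+1) =>
          if h : (i : ℕ) < n then x ⟨i, h⟩
          else φ (Real.sqrt (∑ j : Fin n, (x j) ^ 2))) i) ^ 2) *
      (Real.sqrt (1 +
        (derivWithin φ (Set.Ici 0) (Real.sqrt (∑ j : Fin n, (x j) ^ 2))) ^ 2))⁻¹
      < 2 * n := by
  have hlast (i : Fin (n + 1)) : J i (Fin.last n) = 0 := hblock i _ (Or.inr (by simp))
  exact (bowl_rotation_field_bound_general n (one_le_two.trans hn) φ hC2 h0' hODE J
    hnorm.le hlast x).trans_le (by linarith [n.cast_nonneg (α := ℝ)])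
end

section
/- Let f : ℝ → ℝ be concave on the interval [−1, 1] and satisfy 0 ≤ f(t) ≤ 2 for all t ∈ [−1, 1]. Then the length of the graph of f over [−1, 1], i.e. the total variation of the map t ↦ (t, f(t)) on [−1, 1], is at most 6. -/
/-!
Each chord is at most the sum of its horizontal and vertical parts. The horizontal parts add up to
the length of the base interval. Along a partition, the values of a quasiconcave function increase
up to the partition point where they are largest and decrease from there on, so the vertical parts
add up to at most twice the oscillation of the function.
-/

theorem sqrt_sq_add_sq_le_abs_add_abs (x y : ℝ) : √(x ^ 2 + y ^ 2) ≤ |x| + |y| := by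
  simpa only [Complex.norm_eq_sqrt_sq_add_sq] using Complex.norm_le_abs_re_add_abs_im ⟨x, y⟩

section Variation

variable {α : Type*} [AddCommGroup α] [LinearOrder α] [IsOrderedAddMonoid α]
  {u : ℕ → α} {k m n : ℕ}

theorem sum_Ico_abs_sub_of_monotoneOn (hmn : m ≤ n) (hu : MonotoneOn u (Set.Icc m n)) :
    ∑ j ∈ Finset.Ico m n, |u (j + 1) - u j| = u n - u m := by
  rw [← Finset.sum_Ico_sub u hmn]
  refine Finset.sum_congr rfl fun j hj ↦ abs_of_nonneg (sub_nonneg.2 ?_)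
  obtain ⟨hmj, hjn⟩ := Finset.mem_Ico.1 hj
  exact hu ⟨hmj, hjn.le⟩ ⟨hmj.trans j.le_succ, hjn⟩ j.le_succ

theorem sum_Ico_abs_sub_of_antitoneOn (hmn : m ≤ n) (hu : AntitoneOn u (Set.Icc m n)) :
    ∑ j ∈ Finset.Ico m n, |u (j + 1) - u j| = u m - u n := by
  simpa only [Pi.neg_apply, neg_sub_neg, abs_sub_comm] using
    sum_Ico_abs_sub_of_monotoneOn hmn hu.neg

theorem sum_Ico_abs_sub_of_monotoneOn_of_antitoneOn (hmk : m ≤ k) (hkn : k ≤ n)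
    (hmono : MonotoneOn u (Set.Icc m k)) (hanti : AntitoneOn u (Set.Icc k n)) :
    ∑ j ∈ Finset.Ico m n, |u (j + 1) - u j| = (u k - u m) + (u k - u n) := by
  rw [← Finset.sum_Ico_consecutive _ hmk hkn, sum_Ico_abs_sub_of_monotoneOn hmk hmono,
    sum_Ico_abs_sub_of_antitoneOn hkn hanti]

end Variation

section Quasiconcave

variable {𝕜 β : Type*} [Field 𝕜] [LinearOrder 𝕜] [IsStrictOrderedRing 𝕜] [LinearOrder β]
  {s : Set 𝕜}

theorem min_le_of_quasiconcaveOn_of_mem_Icc {f : 𝕜 → β} {x y z : 𝕜} (hf : QuasiconcaveOn 𝕜 s f)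
    (hx : x ∈ s) (hz : z ∈ s) (hy : y ∈ Set.Icc x z) : min (f x) (f z) ≤ f y :=
  ((hf _).ordConnected.out ⟨hx, min_le_left _ _⟩ ⟨hz, min_le_right _ _⟩ hy).2

theorem exists_monotoneOn_antitoneOn_comp_of_quasiconcaveOn {ι : Type*} [LinearOrder ι]
    {f : 𝕜 → β} {A : Set ι} {t : ι → 𝕜} (hf : QuasiconcaveOn 𝕜 s f) (hA : A.Finite)
    (hA' : A.Nonempty) (ht : MonotoneOn t A) (hts : Set.MapsTo t A s) :
    ∃ k ∈ A, MonotoneOn (f ∘ t) (A ∩ Set.Iic k) ∧ AntitoneOn (f ∘ t) (A ∩ Set.Ici k) := by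
  obtain ⟨k, hk, hmax⟩ := Set.exists_max_image A (f ∘ t) hA hA'
  have min_le {i j l : ι} (hi : i ∈ A) (hj : j ∈ A) (hl : l ∈ A) (hij : i ≤ j) (hjl : j ≤ l) :
      min (f (t i)) (f (t l)) ≤ f (t j) :=
    min_le_of_quasiconcaveOn_of_mem_Icc hf (hts hi) (hts hl) ⟨ht hi hj hij, ht hj hl hjl⟩
  refine ⟨k, hk, fun i ⟨hi, _⟩ j ⟨hj, hjk⟩ hij ↦ ?_, fun i ⟨hi, hki⟩ j ⟨hj, _⟩ hij ↦ ?_⟩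
  · exact (le_min le_rfl (hmax i hi)).trans (min_le hi hj hk hij hjk)
  · exact (le_min (hmax j hj) le_rfl).trans (min_le hk hi hj hki hij)

theorem sum_abs_sub_comp_le_of_quasiconcaveOn {α : Type*} [AddCommGroup α] [LinearOrder α]
    [IsOrderedAddMonoid α] {f : 𝕜 → α} {c d : α} {m : ℕ} {t : ℕ → 𝕜}
    (hf : QuasiconcaveOn 𝕜 s f) (hfcd : Set.MapsTo f s (Set.Icc c d))
    (ht : MonotoneOn t (Set.Iic m)) (hts : Set.MapsTo t (Set.Iic m) s) :
    ∑ j ∈ Finset.range m, |f (t (j + 1)) - f (t j)| ≤ 2 • (d - c) := by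
  obtain ⟨k, hkm, hmono, hanti⟩ := exists_monotoneOn_antitoneOn_comp_of_quasiconcaveOn hf
    (Set.finite_Iic m) Set.nonempty_Iic ht hts
  have hmono' : MonotoneOn (f ∘ t) (Set.Icc 0 k) :=
    hmono.mono fun _ hj ↦ ⟨hj.2.trans hkm, hj.2⟩
  have hanti' : AntitoneOn (f ∘ t) (Set.Icc k m) := hanti.mono fun _ hj ↦ ⟨hj.2, hj.1⟩
  have hbounds {j : ℕ} (hj : j ≤ m) : f (t j) ∈ Set.Icc c d := hfcd (hts hj)
  calc ∑ j ∈ Finset.range m, |f (t (j + 1)) - f (t j)|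
      = (f (t k) - f (t 0)) + (f (t k) - f (t m)) := by
        rw [Finset.range_eq_Ico]
        exact sum_Ico_abs_sub_of_monotoneOn_of_antitoneOn k.zero_le hkm hmono' hanti'
    _ ≤ (d - c) + (d - c) :=
        add_le_add (sub_le_sub (hbounds hkm).2 (hbounds m.zero_le).1)
          (sub_le_sub (hbounds hkm).2 (hbounds le_rfl).1)
    _ = 2 • (d - c) := (two_nsmul _).symm

end Quasiconcave

theorem concave_graph_length_le_six_general {f : ℝ → ℝ} {a b c d : ℝ} {m : ℕ} {t : ℕ → ℝ}
    (hf : QuasiconcaveOn ℝ (Set.Icc a b) f) (hfcd : Set.MapsTo f (Set.Icc a b) (Set.Icc c d))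
    (h0 : t 0 = a) (hm : t m = b) (ht : MonotoneOn t (Set.Iic m)) :
    ∑ j ∈ Finset.range m, √((t (j + 1) - t j) ^ 2 + (f (t (j + 1)) - f (t j)) ^ 2) ≤
      (b - a) + 2 * (d - c) := by
  have hts : Set.MapsTo t (Set.Iic m) (Set.Icc a b) := fun j hj ↦
    ⟨h0 ▸ ht m.zero_le hj j.zero_le, hm ▸ ht hj Set.self_mem_Iic hj⟩
  have horizontal : ∑ j ∈ Finset.range m, |t (j + 1) - t j| = b - a := by
    rw [Finset.range_eq_Ico,
      sum_Ico_abs_sub_of_monotoneOn m.zero_le (ht.mono Set.Icc_subset_Iic_self), h0, hm]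
  have vertical : ∑ j ∈ Finset.range m, |f (t (j + 1)) - f (t j)| ≤ 2 * (d - c) := by
    simpa only [nsmul_eq_mul, Nat.cast_ofNat] using
      sum_abs_sub_comp_le_of_quasiconcaveOn hf hfcd ht hts
  calc ∑ j ∈ Finset.range m, √((t (j + 1) - t j) ^ 2 + (f (t (j + 1)) - f (t j)) ^ 2)
      ≤ ∑ j ∈ Finset.range m, (|t (j + 1) - t j| + |f (t (j + 1)) - f (t j)|) :=
        Finset.sum_le_sum fun _ _ ↦ sqrt_sq_add_sq_le_abs_add_abs _ _
    _ = (b - a) + ∑ j ∈ Finset.range m, |f (t (j + 1)) - f (t j)| := by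
        rw [Finset.sum_add_distrib, horizontal]
    _ ≤ (b - a) + 2 * (d - c) := by gcongr

/-- If `f : ℝ → ℝ` is concave on `[−1,1]` with `0 ≤ f ≤ 2` there, then the
length of the graph of `f` over `[−1,1]` (the total variation of `t ↦ (t, f t)`, with the
Euclidean norm on ℝ²) is at most 6; equivalently, every partition sum is at most 6. -/
theorem concave_graph_length_le_six
    (f : ℝ → ℝ)
    (hconc : ConcaveOn ℝ (Set.Icc (-1 : ℝ) 1) f)
    (hf0 : ∀ t ∈ Set.Icc (-1 : ℝ) 1, 0 ≤ f t)
    (hf2 : ∀ t ∈ Set.Icc (-1 : ℝ) 1, f t ≤ 2) :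
    ∀ (m : ℕ) (t : ℕ → ℝ), 0 < m → t 0 = -1 → t m = 1 →
      (∀ j < m, t j < t (j + 1)) →
      ∑ j ∈ Finset.range m,
          Real.sqrt ((t (j + 1) - t j) ^ 2 + (f (t (j + 1)) - f (t j)) ^ 2) ≤ 6 := by
  intro m t _ h0 hm ht
  exact (concave_graph_length_le_six_general hconc.quasiconcaveOn
    (fun x hx ↦ ⟨hf0 x hx, hf2 x hx⟩) h0 hm
    (strictMonoOn_Iic_of_lt_succ ht).monotoneOn).trans_eq (by norm_num)
end
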